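/- arXiv:2605.01281 — 6 statements merged into one kernel-verified Lean document; each statement's English description precedes it below -/
import Mathlib

section
/- For every real ε > 0 there exists a set S of 9 distinct points in ℝ² such that every subset T ⊆ S with |T| = 4 contains pairwise distinct points A, B, C with |∠ABC − 90°| < ε. Consequently Γ₄(9) = 0 (and hence Γ₄(n) = 0 for all n ≤ 9). -/
open EuclideanGeometry Real

/-!
Flatten an `m × n` grid towards the line spanned by its rows. More than `max m n` of its points
contain two in a common column and a third in another column. As the flattening parameter tends to
`0`, the side joining the first two keeps its direction, while the other one approaches the
direction of the rows, so the angle between them tends to `π / 2`; there are only finitely many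
such triples.
-/

open Filter Finset
open scoped Topology

lemma exists_fst_eq_and_fst_ne_of_card_lt {α β : Type*} {s : Finset α} {t : Finset β}
    {T : Finset (α × β)} (hT : T ⊆ s ×ˢ t) (hs : #s < #T) (ht : #t < #T) :
    ∃ a ∈ T, ∃ b ∈ T, ∃ c ∈ T, a ≠ b ∧ a.1 = b.1 ∧ c.1 ≠ b.1 := by
  obtain ⟨a, ha, b, hb, hab, hcol⟩ := exists_ne_map_eq_of_card_lt_of_maps_to hs
    (f := Prod.fst) fun p hp ↦ (mem_product.1 (hT hp)).1
  obtain ⟨p, hp, q, hq, hpq, hrow⟩ := exists_ne_map_eq_of_card_lt_of_maps_to ht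
    (f := Prod.snd) fun p hp ↦ (mem_product.1 (hT hp)).2
  have hpq_fst : p.1 ≠ q.1 := fun h ↦ hpq (Prod.ext h hrow)
  by_cases hpb : p.1 = b.1
  · exact ⟨a, ha, b, hb, q, hq, hab, hcol, fun hqb ↦ hpq_fst (hpb.trans hqb.symm)⟩
  · exact ⟨a, ha, b, hb, p, hp, hab, hcol, hpb⟩

section Flattening

variable {V : Type*} [NormedAddCommGroup V] [InnerProductSpace ℝ V]

lemma exists_ne_zero_inner_eq_zero_of_one_lt_rank (hV : 1 < Module.rank ℝ V) :
    ∃ e f : V, e ≠ 0 ∧ f ≠ 0 ∧ inner ℝ e f = 0 := by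
  have : Nontrivial V := rank_pos_iff_nontrivial.1 (zero_lt_one.trans hV)
  obtain ⟨e, he⟩ := exists_ne (0 : V)
  have hspan : (ℝ ∙ e)ᗮ ≠ ⊥ := by
    rw [Ne, Submodule.orthogonal_eq_bot_iff]
    intro htop
    have hrank := rank_span_le (R := ℝ) ({e} : Set V)
    rw [htop, rank_top, Cardinal.mk_singleton] at hrank
    exact hV.not_ge hrank
  obtain ⟨f, hf, hf0⟩ := Submodule.exists_mem_ne_zero_of_ne_bot hspan
  exact ⟨e, f, he, hf0, Submodule.mem_orthogonal_singleton_iff_inner_right.1 hf⟩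

/-- The linear map `(x, y) ↦ x e + y δ f`. For `e ⟂ f` it places a planar grid in `V` with its rows
along `e` and its columns along `f`, the latter shrunk by the factor `δ`. -/
noncomputable def flattening (e f : V) (δ : ℝ) : ℝ × ℝ →ₗ[ℝ] V :=
  (LinearMap.toSpanSingleton ℝ V e).coprod (LinearMap.toSpanSingleton ℝ V (δ • f))

lemma flattening_apply (e f : V) (δ : ℝ) (p : ℝ × ℝ) :
    flattening e f δ p = p.1 • e + p.2 • δ • f := rfl

variable {e f : V}

lemma flattening_injective (he : e ≠ 0) (hf : f ≠ 0) (hef : inner ℝ e f = 0) {δ : ℝ}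
    (hδ : δ ≠ 0) : Function.Injective (flattening e f δ) := by
  refine (injective_iff_map_eq_zero _).2 fun p hp ↦ ?_
  have hfst : p.1 = 0 := by
    simpa [flattening_apply, inner_add_right, inner_smul_right, hef, he] using
      congrArg (inner ℝ e) hp
  have hsnd : p.2 = 0 := by simpa [flattening_apply, hfst, hδ, hf] using hp
  exact Prod.ext hfst hsnd

lemma tendsto_angle_flattening (he : e ≠ 0) (hf : f ≠ 0) (hef : inner ℝ e f = 0) {u w : ℝ × ℝ}
    (hu_fst : u.1 = 0) (hu_snd : u.2 ≠ 0) (hw : w.1 ≠ 0) :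
    Tendsto (fun δ ↦ InnerProductGeometry.angle (flattening e f δ u) (flattening e f δ w))
      (𝓝[>] 0) (𝓝 (π / 2)) := by
  have hcolumn : ∀ δ > 0, InnerProductGeometry.angle (u.2 • f) (flattening e f δ w) =
      InnerProductGeometry.angle (flattening e f δ u) (flattening e f δ w) := by
    intro δ hδ
    rw [flattening_apply e f δ u, hu_fst, zero_smul, zero_add, smul_comm,
      InnerProductGeometry.angle_smul_left_of_pos _ _ hδ]
  have hrow : Tendsto (fun δ ↦ flattening e f δ w) (𝓝 0) (𝓝 (w.1 • e)) := by
    have hcont : Continuous fun δ : ℝ ↦ w.1 • e + w.2 • δ • f := by fun_prop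
    simpa [flattening_apply] using hcont.tendsto 0
  have hright : InnerProductGeometry.angle (u.2 • f) (w.1 • e) = π / 2 := by
    rw [← InnerProductGeometry.inner_eq_zero_iff_angle_eq_pi_div_two, inner_smul_left,
      inner_smul_right, real_inner_comm, hef, mul_zero, mul_zero]
  have hlim : Tendsto (fun δ ↦ InnerProductGeometry.angle (u.2 • f) (flattening e f δ w))
      (𝓝 0) (𝓝 (π / 2)) := by
    have hangle := InnerProductGeometry.continuousAt_angle (x := (u.2 • f, w.1 • e))
      (smul_ne_zero hu_snd hf) (smul_ne_zero hw he)
    simpa only [hright, Function.comp_def] using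
      hangle.tendsto.comp (tendsto_const_nhds.prodMk_nhds hrow)
  exact (hlim.mono_left nhdsWithin_le_nhds).congr' (eventually_mem_nhdsWithin.mono hcolumn)

lemma eventually_abs_angle_flattening_sub_lt (he : e ≠ 0) (hf : f ≠ 0) (hef : inner ℝ e f = 0)
    (F : Finset (ℝ × ℝ)) {ε : ℝ} (hε : 0 < ε) :
    ∀ᶠ δ in 𝓝[>] 0, ∀ a ∈ F, ∀ b ∈ F, ∀ c ∈ F, a ≠ b → a.1 = b.1 → c.1 ≠ b.1 →
      |∠ (flattening e f δ a) (flattening e f δ b) (flattening e f δ c) - π / 2| < ε := by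
  simp only [eventually_all_finset, eventually_imp_distrib_left]
  intro a _ b _ c _ hab hcol hne
  have hsnd : a.2 ≠ b.2 := fun h ↦ hab (Prod.ext hcol h)
  have hlim := tendsto_angle_flattening he hf hef (u := a - b) (w := c - b)
    (sub_eq_zero.2 hcol) (sub_ne_zero.2 hsnd) (sub_ne_zero.2 hne)
  simpa only [EuclideanGeometry.angle, vsub_eq_sub, map_sub, Real.dist_eq] using
    Metric.tendsto_nhds.1 hlim ε hε

theorem gamma_four_nine_eq_zero_general (hV : 1 < Module.rank ℝ V) (m n : ℕ) {ε : ℝ}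
    (hε : 0 < ε) :
    ∃ S : Finset V, #S = m * n ∧
      ∀ T ⊆ S, m < #T → n < #T →
        ∃ A ∈ T, ∃ B ∈ T, ∃ C ∈ T, A ≠ B ∧ B ≠ C ∧ A ≠ C ∧ |∠ A B C - π / 2| < ε := by
  classical
  obtain ⟨e, f, he, hf, hef⟩ := exists_ne_zero_inner_eq_zero_of_one_lt_rank hV
  obtain ⟨X, rfl⟩ := Infinite.exists_subset_card_eq ℝ m
  obtain ⟨Y, rfl⟩ := Infinite.exists_subset_card_eq ℝ n
  obtain ⟨δ, hangle, hδ⟩ := ((eventually_abs_angle_flattening_sub_lt he hf hef (X ×ˢ Y) hε).and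
    eventually_mem_nhdsWithin).exists
  have hinj := flattening_injective he hf hef (ne_of_gt hδ)
  have hcard : #((X ×ˢ Y).image (flattening e f δ)) = #X * #Y := by
    rw [card_image_of_injective _ hinj, card_product]
  refine ⟨_, hcard, fun T hTS hX hY ↦ ?_⟩
  obtain ⟨U, hU, rfl⟩ := subset_image_iff.1 hTS
  rw [card_image_of_injective _ hinj] at hX hY
  obtain ⟨a, ha, b, hb, c, hc, hab, hcol, hne⟩ := exists_fst_eq_and_fst_ne_of_card_lt hU hX hY
  have hbc : b ≠ c := fun h ↦ hne (congrArg Prod.fst h.symm)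
  have hac : a ≠ c := fun h ↦ hne (h ▸ hcol)
  exact ⟨_, mem_image_of_mem _ ha, _, mem_image_of_mem _ hb, _, mem_image_of_mem _ hc,
    hinj.ne hab, hinj.ne hbc, hinj.ne hac, hangle a (hU ha) b (hU hb) c (hU hc) hab hcol hne⟩

end Flattening

/-- **Γ₄(9) = 0.** For every ε > 0 there is a set of 9 distinct points in the plane such
that every 4-element subset contains three pairwise distinct points forming an angle
within ε of a right angle. -/
theorem gamma_four_nine_eq_zero (ε : ℝ) (hε : 0 < ε) :
    ∃ S : Finset (EuclideanSpace ℝ (Fin 2)), S.card = 9 ∧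
      ∀ T ⊆ S, T.card = 4 →
        ∃ A ∈ T, ∃ B ∈ T, ∃ C ∈ T, A ≠ B ∧ B ≠ C ∧ A ≠ C ∧
          |∠ A B C - π / 2| < ε := by
  obtain ⟨S, hS, h⟩ := gamma_four_nine_eq_zero_general
    (V := EuclideanSpace ℝ (Fin 2)) (by simp [← Module.finrank_eq_rank]) 3 3 hε
  exact ⟨S, hS, fun T hTS hT ↦ h T hTS (by lia) (by lia)⟩
end

section
/- For every integer k ≥ 3, every set S of (k−1)² + 1 distinct points in ℝ² contains a subset T ⊆ S with |T| = k such that no three pairwise distinct points A, B, C ∈ T satisfy ∠ABC = 90°. Consequently r(k) ≤ (k−1)² + 1. -/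
open EuclideanGeometry Real

/-!
Choose coordinate axes in which distinct points of the set differ in both coordinates. By
Erdős–Szekeres, some `k` of the points have their second coordinate monotone in the first, so for
any `B` among them the others lie in two opposite open quadrants centred at `B`. The two summands of
the dot product of `A - B` and `C - B` in these axes are then nonzero and of the same sign.
-/

open Finset Module
open scoped RealInnerProductSpace

section ErdosSzekeres

variable {α β γ : Type*} {n m : ℕ} {S : Finset α}

theorem exists_subset_isChain_or_isAntichain_of_mul_lt_card (r : α → α → Prop) [IsStrictOrder α r]
    (hS : n * m < #S) :
    (∃ T ⊆ S, #T = n + 1 ∧ IsChain r (T : Set α)) ∨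
      ∃ T ⊆ S, #T = m + 1 ∧ IsAntichain r (T : Set α) := by
  classical
  let := partialOrderOfSO r
  induction n generalizing S with
  | zero =>
    obtain ⟨T, hTS, hT⟩ := exists_subset_card_eq (show 1 ≤ #S by lia)
    exact .inl ⟨T, hTS, hT, (card_le_one_iff_subsingleton.1 hT.le).isChain⟩
  | succ n ih =>
    let M := {p ∈ S | ∀ q ∈ S, ¬ r q p}
    have hMS : M ⊆ S := filter_subset _ _
    have hM : IsAntichain r (M : Set α) := fun p hp q hq _ ↦
      (mem_filter.1 hq).2 p (hMS hp)
    rcases lt_or_ge m #M with hm | hm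
    · obtain ⟨T, hTM, hT⟩ := exists_subset_card_eq (Nat.succ_le_of_lt hm)
      exact .inr ⟨T, hTM.trans hMS, hT, hM.subset hTM⟩
    have hcard : n * m < #(S \ M) := by
      rw [card_sdiff_of_subset hMS]
      lia
    rcases ih hcard with ⟨T, hTS, hT, hchain⟩ | ⟨T, hTS, hT, hanti⟩
    · obtain ⟨p, hp⟩ := T.exists_minimal (card_pos.1 (by lia))
      obtain ⟨q, hqS, hqp⟩ : ∃ q ∈ S, r q p := by
        simpa [M, (mem_sdiff.1 (hTS hp.prop)).1] using (mem_sdiff.1 (hTS hp.prop)).2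
      have hqT : ∀ t ∈ T, r q t := fun t ht ↦ by
        rcases eq_or_ne p t with rfl | hpt
        · exact hqp
        · exact _root_.trans hqp ((hchain hp.prop ht hpt).resolve_right (hp.not_lt ht))
      refine .inl ⟨insert q T, insert_subset hqS (hTS.trans sdiff_subset), ?_, ?_⟩
      · rw [card_insert_of_notMem fun h ↦ irrefl q (hqT q h), hT]
      · rw [coe_insert]
        exact hchain.insert fun t ht _ ↦ .inl (hqT t ht)
    · exact .inr ⟨T, hTS.trans sdiff_subset, hT, hanti⟩

theorem exists_subset_monovaryOn_or_antivaryOn_of_mul_lt_card [LinearOrder β] [Preorder γ]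
    (f : α → β) (g : α → γ) (hS : n * m < #S) :
    (∃ T ⊆ S, #T = n + 1 ∧ MonovaryOn f g T) ∨ ∃ T ⊆ S, #T = m + 1 ∧ AntivaryOn f g T := by
  let r : α → α → Prop := fun p q ↦ g p < g q ∧ f p ≤ f q
  have : IsStrictOrder α r :=
    { irrefl := fun _ h ↦ h.1.false
      trans := fun _ _ _ h h' ↦ ⟨h.1.trans h'.1, h.2.trans h'.2⟩ }
  rcases exists_subset_isChain_or_isAntichain_of_mul_lt_card r hS with
    ⟨T, hTS, hT, hchain⟩ | ⟨T, hTS, hT, hanti⟩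
  · refine .inl ⟨T, hTS, hT, fun p hp q hq hg ↦ ?_⟩
    exact ((hchain hp hq (ne_of_apply_ne g hg.ne)).resolve_right fun h ↦ hg.asymm h.1).2
  · refine .inr ⟨T, hTS, hT, fun p hp q hq hg ↦ ?_⟩
    exact (not_le.1 fun h ↦ hanti hp hq (ne_of_apply_ne g hg.ne) ⟨hg, h⟩).le

end ErdosSzekeres

section Plane

variable {V : Type*} [NormedAddCommGroup V] [InnerProductSpace ℝ V] [Fact (finrank ℝ V = 2)]

section Orientation

variable (o : Orientation ℝ V (Fin 2))

theorem exists_forall_inner_mul_areaForm_ne_zero {ι : Type*} [Finite ι] {v : ι → V}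
    (hv : ∀ i, v i ≠ 0) : ∃ a : V, ∀ i, ⟪a, v i⟫ * o.areaForm a (v i) ≠ 0 := by
  let φ : ι ⊕ ι → Dual ℝ V :=
    Sum.elim (fun i ↦ innerₛₗ ℝ (v i)) (fun i ↦ o.areaForm (v i))
  have hφ : ∀ i, ∃ x, φ i x ≠ 0 := by
    rintro (i | i)
    · exact ⟨v i, by simpa [φ] using hv i⟩
    · exact ⟨o.rightAngleRotation (v i), by simpa [φ] using hv i⟩
  obtain ⟨a, ha⟩ := Dual.exists_forall_ne_zero_of_forall_exists φ hφ
  refine ⟨a, fun i ↦ mul_ne_zero ?_ ?_⟩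
  · rw [real_inner_comm]
    exact ha (.inl i)
  · rw [o.areaForm_swap]
    exact neg_ne_zero.2 (ha (.inr i))

/-- `⟪a, x⟫` and `o.areaForm a x` are the coordinates of `x`, up to the factor `‖a‖`, on the axes
spanned by `a` and its rotation by a right angle; their product tells the pair of opposite quadrants
containing `x`. -/
theorem inner_ne_zero_of_inner_mul_areaForm_mul_pos {a x y : V}
    (h : 0 < (⟪a, x⟫ * o.areaForm a x) * (⟪a, y⟫ * o.areaForm a y)) : ⟪x, y⟫ ≠ 0 := by
  intro hxy
  have hsum : ⟪a, x⟫ * ⟪a, y⟫ + o.areaForm a x * o.areaForm a y = 0 := by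
    rw [o.inner_mul_inner_add_areaForm_mul_areaForm, hxy, mul_zero]
  have hneg : (⟪a, x⟫ * o.areaForm a x) * (⟪a, y⟫ * o.areaForm a y) = -(⟪a, x⟫ * ⟪a, y⟫) ^ 2 := by
    linear_combination ⟪a, x⟫ * ⟪a, y⟫ * hsum
  linarith [sq_nonneg (⟪a, x⟫ * ⟪a, y⟫)]

end Orientation

variable {P : Type*} [MetricSpace P] [NormedAddTorsor V P]

theorem exists_subset_inner_mul_areaForm_nonneg_or_nonpos (o : Orientation ℝ V (Fin 2)) (a : V)
    {n m : ℕ} {S : Finset P} (hS : n * m < #S) :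
    (∃ T ⊆ S, #T = n + 1 ∧
        ∀ A ∈ T, ∀ B ∈ T, 0 ≤ ⟪a, A -ᵥ B⟫ * o.areaForm a (A -ᵥ B)) ∨
      ∃ T ⊆ S, #T = m + 1 ∧
        ∀ A ∈ T, ∀ B ∈ T, ⟪a, A -ᵥ B⟫ * o.areaForm a (A -ᵥ B) ≤ 0 := by
  let O : P := Classical.arbitrary P
  have hsub (A B : P) : ⟪a, A -ᵥ B⟫ * o.areaForm a (A -ᵥ B) =
      (⟪a, A -ᵥ O⟫ - ⟪a, B -ᵥ O⟫) * (o.areaForm a (A -ᵥ O) - o.areaForm a (B -ᵥ O)) := by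
    rw [← inner_sub_right, ← map_sub, vsub_sub_vsub_cancel_right]
  simp only [hsub]
  refine (exists_subset_monovaryOn_or_antivaryOn_of_mul_lt_card
    (fun A : P ↦ ⟪a, A -ᵥ O⟫) (fun A ↦ o.areaForm a (A -ᵥ O)) hS).imp ?_ ?_
  · rintro ⟨T, hTS, hT, hmono⟩
    exact ⟨T, hTS, hT, fun A hA B hB ↦ hmono.sub_mul_sub_nonneg hB hA⟩
  · rintro ⟨T, hTS, hT, hanti⟩
    exact ⟨T, hTS, hT, fun A hA B hB ↦ hanti.sub_mul_sub_nonpos hB hA⟩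

theorem rk_le_sq_general {n : ℕ} {S : Finset P} (hS : n ^ 2 < #S) :
    ∃ T ⊆ S, #T = n + 1 ∧
      ∀ A ∈ T, ∀ B ∈ T, ∀ C ∈ T, A ≠ B → B ≠ C → ∠ A B C ≠ π / 2 := by
  have : FiniteDimensional ℝ V := .of_fact_finrank_eq_two
  let o : Orientation ℝ V (Fin 2) := (finBasisOfFinrankEq ℝ V Fact.out).orientation
  obtain ⟨a, ha⟩ := exists_forall_inner_mul_areaForm_ne_zero o
    (v := fun x : S.offDiag ↦ x.1.1 -ᵥ x.1.2) fun x ↦ vsub_ne_zero.2 (mem_offDiag.1 x.2).2.2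
  have hne {A B : P} (hA : A ∈ S) (hB : B ∈ S) (hAB : A ≠ B) :
      ⟪a, A -ᵥ B⟫ * o.areaForm a (A -ᵥ B) ≠ 0 :=
    ha ⟨(A, B), mem_offDiag.2 ⟨hA, hB, hAB⟩⟩
  obtain ⟨T, hTS, hT, hquad⟩ : ∃ T ⊆ S, #T = n + 1 ∧ ∀ A ∈ T, ∀ B ∈ T, ∀ C ∈ T,
      0 ≤ (⟪a, A -ᵥ B⟫ * o.areaForm a (A -ᵥ B)) * (⟪a, C -ᵥ B⟫ * o.areaForm a (C -ᵥ B)) := by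
    rcases exists_subset_inner_mul_areaForm_nonneg_or_nonpos o a (sq n ▸ hS) with
      ⟨T, hTS, hT, hsign⟩ | ⟨T, hTS, hT, hsign⟩
    · exact ⟨T, hTS, hT, fun A hA B hB C hC ↦ mul_nonneg (hsign A hA B hB) (hsign C hC B hB)⟩
    · exact ⟨T, hTS, hT, fun A hA B hB C hC ↦
        mul_nonneg_of_nonpos_of_nonpos (hsign A hA B hB) (hsign C hC B hB)⟩
  refine ⟨T, hTS, hT, fun A hA B hB C hC hAB hBC ↦ ?_⟩
  rw [EuclideanGeometry.angle, Ne, ← InnerProductGeometry.inner_eq_zero_iff_angle_eq_pi_div_two]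
  exact inner_ne_zero_of_inner_mul_areaForm_mul_pos o <| (hquad A hA B hB C hC).lt_of_ne' <|
    mul_ne_zero (hne (hTS hA) (hTS hB) hAB) (hne (hTS hC) (hTS hB) hBC.symm)

end Plane

/-- **r(k) ≤ (k−1)² + 1.** Every set of (k−1)² + 1 distinct points in the plane (k ≥ 3)
contains a k-element subset with no right angles. -/
theorem rk_le_sq (k : ℕ) (hk : 3 ≤ k)
    (S : Finset (EuclideanSpace ℝ (Fin 2))) (hS : S.card = (k - 1) ^ 2 + 1) :
    ∃ T ⊆ S, T.card = k ∧
      ∀ A ∈ T, ∀ B ∈ T, ∀ C ∈ T, A ≠ B → B ≠ C → A ≠ C →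
        ∠ A B C ≠ π / 2 := by
  have : Fact (finrank ℝ (EuclideanSpace ℝ (Fin 2)) = 2) := ⟨finrank_euclideanSpace_fin⟩
  obtain ⟨T, hTS, hT, hangle⟩ := rk_le_sq_general (n := k - 1) (S := S) (by lia)
  exact ⟨T, hTS, by lia, fun A hA B hB C hC hAB hBC _ ↦ hangle A hA B hB C hC hAB hBC⟩
end

section
/- For all integers m ≥ 2 and k ≥ 3, every set S of at least (k−1)^m + 1 distinct points in ℝ² contains a subset T ⊆ S with |T| = k such that for all pairwise distinct A, B, C ∈ T, either ∠ABC ≤ 180°/m or ∠ABC ≥ 180° − 180°/m. -/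
open EuclideanGeometry Real

/-!
Identify the plane with `ℂ` and cut `[0, π)` into `m` half-open bins of width `π / m`. Write
`A ≺ᵢ B` when the argument of `B - A` lies in the `i`-th bin. The complex numbers with argument in
one bin are closed under addition, so each `≺ᵢ` is a strict partial order, and any two distinct
points are comparable in one of these orders because `z` or `-z` has its argument in `[0, π)`.
If every `≺ᵢ`-chain had at most `k - 1` points, recording for each point its height in each of the
`m` orders would be an injection of `S` into a set with `(k - 1) ^ m` elements. In a `≺ᵢ`-chain of
`k` points all segments point, up to sign, into the same bin, so their directions differ by less
than `π / m`.
-/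

section Chains

variable {α ι : Type*}

theorem chainHeight_setOf_rel_lt {r : α → α → Prop} [Std.Irrefl r] {s t : Set α} {x : α}
    (hfin : {y ∈ s | r y x}.chainHeight r ≠ ⊤) (hx : x ∈ t) (hst : {y ∈ s | r y x} ⊆ t) :
    {y ∈ s | r y x}.chainHeight r < t.chainHeight r := by
  obtain ⟨c, hcs, hcard, hc⟩ := Set.exists_eq_chainHeight_of_chainHeight_ne_top _ r hfin
  have hxc : x ∉ c := fun h => irrefl x (hcs h).2
  have hinsert : IsChain r (insert x c) := hc.insert fun y hy _ => Or.inr (hcs hy).2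
  calc {y ∈ s | r y x}.chainHeight r < {y ∈ s | r y x}.chainHeight r + 1 :=
        ENat.lt_add_one_iff hfin |>.2 le_rfl
    _ = (insert x c).encard := by rw [Set.encard_insert_of_notMem hxc, hcard]
    _ ≤ t.chainHeight r := Set.encard_le_chainHeight_of_isChain _ _
        (Set.insert_subset hx (hcs.trans hst)) hinsert

/-- **Mirsky's theorem**, in terms of a height function: its level sets are antichains. -/
theorem exists_height_of_chainHeight_le (r : α → α → Prop) [IsStrictOrder α r] {s : Set α} {n : ℕ}
    (hn : s.chainHeight r ≤ n) :
    ∃ h : α → ℕ, (∀ x ∈ s, h x < n) ∧ ∀ x ∈ s, ∀ y ∈ s, r x y → h x < h y := by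
  have hfin (x : α) : {y ∈ s | r y x}.chainHeight r ≠ ⊤ :=
    ne_top_of_le_ne_top (ENat.natCast_ne_top n)
      ((Set.chainHeight_mono r _ s fun _ hy => hy.1).trans hn)
  refine ⟨fun x => ({y ∈ s | r y x}.chainHeight r).toNat, fun x hx => ?_, fun x hx y _ hxy => ?_⟩
  · rw [← ENat.natCast_lt_natCast, ENat.natCast_toNat (hfin x)]
    exact (chainHeight_setOf_rel_lt (hfin x) hx fun _ hy => hy.1).trans_le hn
  · rw [← ENat.natCast_lt_natCast, ENat.natCast_toNat (hfin x), ENat.natCast_toNat (hfin y)]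
    exact chainHeight_setOf_rel_lt (hfin x) ⟨hx, hxy⟩ fun z hz => ⟨hz.1, _root_.trans hz.2 hxy⟩

variable [Fintype ι] (r : ι → α → α → Prop) [∀ i, IsStrictOrder α (r i)] {S : Finset α} {n : ι → ℕ}

theorem card_le_prod_of_chainHeight_le
    (hr : (S : Set α).Pairwise fun x y => ∃ i, r i x y ∨ r i y x)
    (hn : ∀ i, (S : Set α).chainHeight (r i) ≤ n i) : S.card ≤ ∏ i, n i := by
  classical
  choose h hlt hmono using fun i => exists_height_of_chainHeight_le (r i) (hn i)
  have hmaps : Set.MapsTo (fun x i => h i x) S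
      (Fintype.piFinset fun i => Finset.range (n i) : Finset (ι → ℕ)) := fun x hx => by
    simpa using fun i => hlt i x hx
  have hinj : Set.InjOn (fun x i => h i x) (S : Set α) := fun x hx y hy hxy => by
    by_contra hne
    obtain ⟨i, hi | hi⟩ := hr hx hy hne
    · exact (hmono i x hx y hy hi).ne (congrFun hxy i)
    · exact (hmono i y hy x hx hi).ne' (congrFun hxy i)
  simpa using Finset.card_le_card_of_injOn _ hmaps hinj

theorem exists_isChain_of_prod_lt_card
    (hr : (S : Set α).Pairwise fun x y => ∃ i, r i x y ∨ r i y x) (hS : ∏ i, n i < S.card) :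
    ∃ i, ∃ T ⊆ S, T.card = n i + 1 ∧ IsChain (r i) (T : Set α) := by
  obtain ⟨i, hi⟩ : ∃ i, n i < (S : Set α).chainHeight (r i) := by
    by_contra! hle
    exact (card_le_prod_of_chainHeight_le r hr hle).not_gt hS
  obtain ⟨T, hTS, hTcard, hT⟩ := Set.exists_isChain_of_le_chainHeight (n i + 1)
    (by exact_mod_cast Order.add_one_le_of_lt hi)
  lift T to Finset α using S.finite_toSet.subset hTS
  exact ⟨i, T, Finset.coe_subset.1 hTS, by exact_mod_cast hTcard, hT⟩

end Chains

section Sectors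

open ComplexConjugate

theorem conj_mul_im_eq_norm_mul_sin (z w : ℂ) :
    (conj z * w).im = ‖z‖ * ‖w‖ * Real.sin (w.arg - z.arg) := by
  rw [Real.sin_sub, Complex.mul_im, Complex.conj_re, Complex.conj_im,
    ← Complex.norm_mul_cos_arg z, ← Complex.norm_mul_sin_arg z,
    ← Complex.norm_mul_cos_arg w, ← Complex.norm_mul_sin_arg w]
  ring

theorem arg_le_arg_iff_conj_mul_im_nonneg {z w : ℂ} (hz : z ≠ 0) (hw : w ≠ 0)
    (h : |w.arg - z.arg| < π) : z.arg ≤ w.arg ↔ 0 ≤ (conj z * w).im := by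
  obtain ⟨hlo, hhi⟩ := abs_lt.1 h
  rw [conj_mul_im_eq_norm_mul_sin,
    mul_nonneg_iff_of_pos_left (mul_pos (norm_pos_iff.2 hz) (norm_pos_iff.2 hw))]
  constructor
  · exact fun hle => Real.sin_nonneg_of_nonneg_of_le_pi (sub_nonneg.2 hle) hhi.le
  · intro hsin
    by_contra! hlt
    exact (Real.sin_neg_of_neg_of_neg_pi_lt (sub_neg.2 hlt) hlo).not_ge hsin

theorem angle_eq_abs_arg_sub_arg {z w : ℂ} (hz : z ≠ 0) (hw : w ≠ 0)
    (h : |z.arg - w.arg| < π) : InnerProductGeometry.angle z w = |z.arg - w.arg| := by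
  obtain ⟨hlo, hhi⟩ := abs_lt.1 h
  have harg : (z / w).arg = z.arg - w.arg := by
    rw [← Complex.arg_coe_angle_toReal_eq_arg (z / w), Complex.arg_div_coe_angle hz hw,
      ← Real.Angle.coe_sub, Real.Angle.toReal_coe_eq_self_iff]
    exact ⟨hlo, hhi.le⟩
  rw [Complex.angle_eq_abs_arg hz hw, harg]

/-- The angular sector of the nonzero complex numbers whose principal argument, which lies in
`(-π, π]`, belongs to `I`. Zero has no direction and is left out, although `Complex.arg 0 = 0`. -/
def angularSector (I : Set ℝ) : Set ℂ := {z | z ≠ 0 ∧ z.arg ∈ I}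

variable {z w : ℂ}

theorem mem_angularSector_Ico_zero_pi :
    z ∈ angularSector (Set.Ico 0 π) ↔ 0 < z.im ∨ z.im = 0 ∧ 0 < z.re := by
  simp only [angularSector, Set.mem_ofPred_eq, Set.mem_Ico, Complex.arg_nonneg_iff,
    Complex.arg_lt_pi_iff, ne_eq, Complex.ext_iff, Complex.zero_re, Complex.zero_im]
  grind

theorem mem_or_neg_mem_angularSector_Ico_zero_pi (hz : z ≠ 0) :
    z ∈ angularSector (Set.Ico 0 π) ∨ -z ∈ angularSector (Set.Ico 0 π) := by
  simp only [mem_angularSector_Ico_zero_pi, Complex.neg_im, Complex.neg_re]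
  rw [ne_eq, Complex.ext_iff, Complex.zero_re, Complex.zero_im] at hz
  grind

theorem add_mem_angularSector_Ico_zero_pi (hz : z ∈ angularSector (Set.Ico 0 π))
    (hw : w ∈ angularSector (Set.Ico 0 π)) : z + w ∈ angularSector (Set.Ico 0 π) := by
  rw [mem_angularSector_Ico_zero_pi] at hz hw ⊢
  rw [Complex.add_im, Complex.add_re]
  grind

theorem arg_add_mem_Icc (hz : z ∈ angularSector (Set.Ico 0 π))
    (hw : w ∈ angularSector (Set.Ico 0 π)) (h : z.arg ≤ w.arg) :
    (z + w).arg ∈ Set.Icc z.arg w.arg := by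
  have hzw := add_mem_angularSector_Ico_zero_pi hz hw
  have hcriterion {u v : ℂ} (hu : u ∈ angularSector (Set.Ico 0 π))
      (hv : v ∈ angularSector (Set.Ico 0 π)) : u.arg ≤ v.arg ↔ 0 ≤ (conj u * v).im :=
    arg_le_arg_iff_conj_mul_im_nonneg hu.1 hv.1 <|
      abs_sub_lt_iff.2 ⟨by linarith [hu.2.1, hv.2.2], by linarith [hu.2.2, hv.2.1]⟩
  have hleft : (conj z * (z + w)).im = (conj z * w).im := by
    simp only [Complex.mul_im, Complex.add_re, Complex.add_im, Complex.conj_re, Complex.conj_im]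
    ring
  have hright : (conj (z + w) * w).im = (conj z * w).im := by
    simp only [Complex.mul_im, Complex.add_re, Complex.add_im, Complex.conj_re, Complex.conj_im]
    ring
  rw [hcriterion hz hw] at h
  rw [Set.mem_Icc, hcriterion hz hzw, hcriterion hzw hw, hleft, hright]
  exact ⟨h, h⟩

theorem add_mem_angularSector {I : Set ℝ} [I.OrdConnected] (hI : I ⊆ Set.Ico 0 π)
    (hz : z ∈ angularSector I) (hw : w ∈ angularSector I) : z + w ∈ angularSector I := by
  wlog h : z.arg ≤ w.arg generalizing z w
  · exact add_comm w z ▸ this hw hz (le_of_not_ge h)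
  have hz' : z ∈ angularSector (Set.Ico 0 π) := ⟨hz.1, hI hz.2⟩
  have hw' : w ∈ angularSector (Set.Ico 0 π) := ⟨hw.1, hI hw.2⟩
  exact ⟨(add_mem_angularSector_Ico_zero_pi hz' hw').1,
    Set.Icc_subset I hz.2 hw.2 (arg_add_mem_Icc hz' hw' h)⟩

theorem angle_lt_of_mem_angularSector_Ico {a b : ℝ} (hab : b - a ≤ π)
    (hz : z ∈ angularSector (Set.Ico a b)) (hw : w ∈ angularSector (Set.Ico a b)) :
    InnerProductGeometry.angle z w < b - a := by
  have h : |z.arg - w.arg| < b - a := abs_sub_lt_iff.2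
    ⟨by linarith [hz.2.2, hw.2.1], by linarith [hz.2.1, hw.2.2]⟩
  rwa [angle_eq_abs_arg_sub_arg hz.1 hw.1 (h.trans_le hab)]

theorem angle_lt_or_lt_angle_of_mem_or_neg_mem_angularSector {a b : ℝ} (hab : b - a ≤ π)
    (hz : z ∈ angularSector (Set.Ico a b) ∨ -z ∈ angularSector (Set.Ico a b))
    (hw : w ∈ angularSector (Set.Ico a b) ∨ -w ∈ angularSector (Set.Ico a b)) :
    InnerProductGeometry.angle z w < b - a ∨ π - (b - a) < InnerProductGeometry.angle z w := by
  rcases hz with hz | hz <;> rcases hw with hw | hw <;>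
    have h := angle_lt_of_mem_angularSector_Ico hab hz hw
  · exact Or.inl h
  · rw [InnerProductGeometry.angle_neg_right] at h
    exact Or.inr (sub_lt_comm.1 h)
  · rw [InnerProductGeometry.angle_neg_left] at h
    exact Or.inr (sub_lt_comm.1 h)
  · rw [InnerProductGeometry.angle_neg_neg] at h
    exact Or.inl h

/-- The `i`-th of the `m` half-open bins of width `π / m` into which `[0, π)` is cut. -/
def angularBin (m : ℕ) (i : Fin m) : Set ℝ := Set.Ico (i * (π / m)) ((i + 1) * (π / m))

instance ordConnected_angularBin (m : ℕ) (i : Fin m) : (angularBin m i).OrdConnected :=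
  Set.ordConnected_Ico

theorem iUnion_angularBin {m : ℕ} (hm : m ≠ 0) : ⋃ i, angularBin m i = Set.Ico 0 π := by
  have hm' : (0 : ℝ) < m := by positivity
  have hwidth : 0 < π / m := by positivity
  ext t
  rw [Set.mem_iUnion]
  constructor
  · rintro ⟨i, hlo, hhi⟩
    have hi : (i : ℝ) + 1 ≤ m := by exact_mod_cast i.isLt
    refine ⟨le_trans (by positivity) hlo, hhi.trans_le ?_⟩
    calc ((i : ℝ) + 1) * (π / m) ≤ m * (π / m) := by gcongr
      _ = π := mul_div_cancel₀ _ hm'.ne'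
  · rintro ⟨hlo, hhi⟩
    have hquot : 0 ≤ t / (π / m) := by positivity
    have hfloor : ⌊t / (π / m)⌋₊ < m := by
      rwa [Nat.floor_lt hquot, div_lt_iff₀ hwidth, mul_div_cancel₀ _ hm'.ne']
    exact ⟨⟨_, hfloor⟩, (le_div_iff₀ hwidth).1 (Nat.floor_le hquot),
      (div_lt_iff₀ hwidth).1 (Nat.lt_floor_add_one _)⟩

end Sectors

section Points

variable {V P : Type*} [NormedAddCommGroup V] [InnerProductSpace ℝ V] [MetricSpace P]
  [NormedAddTorsor V P]

/-- The relation `A ≺ B` on points saying that the segment from `A` to `B` points into the angular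
sector of `I`, where `f` turns displacement vectors into complex numbers. -/
def SegmentPointsInto (f : V →ₗᵢ[ℝ] ℂ) (I : Set ℝ) (A B : P) : Prop :=
  f (B -ᵥ A) ∈ angularSector I

variable (f : V →ₗᵢ[ℝ] ℂ)

theorem isStrictOrder_segmentPointsInto {I : Set ℝ} [I.OrdConnected] (hI : I ⊆ Set.Ico 0 π) :
    IsStrictOrder P (SegmentPointsInto f I) where
  irrefl A h := h.1 (by rw [vsub_self, map_zero])
  trans A B C hAB hBC := by
    have h := add_mem_angularSector hI hBC hAB
    rwa [← map_add, vsub_add_vsub_cancel] at h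

theorem segmentPointsInto_swap_iff {I : Set ℝ} {A B : P} :
    SegmentPointsInto f I B A ↔ -f (B -ᵥ A) ∈ angularSector I := by
  rw [← map_neg, neg_vsub_eq_vsub_rev, SegmentPointsInto]

theorem exists_segmentPointsInto_angularBin {m : ℕ} (hm : m ≠ 0) {A B : P} (hAB : A ≠ B) :
    ∃ i, SegmentPointsInto f (angularBin m i) A B ∨ SegmentPointsInto f (angularBin m i) B A := by
  have hne : f (B -ᵥ A) ≠ 0 :=
    (map_ne_zero_iff f f.injective).2 (vsub_ne_zero.2 hAB.symm)
  rcases mem_or_neg_mem_angularSector_Ico_zero_pi hne with ⟨h, harg⟩ | ⟨h, harg⟩ <;>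
    obtain ⟨i, hi⟩ := Set.mem_iUnion.1 (iUnion_angularBin hm ▸ harg)
  · exact ⟨i, Or.inl ⟨h, hi⟩⟩
  · exact ⟨i, Or.inr ((segmentPointsInto_swap_iff f).2 ⟨h, hi⟩)⟩

theorem angle_lt_or_lt_angle_of_isChain {a b : ℝ} (hab : b - a ≤ π) {T : Set P}
    (hT : IsChain (SegmentPointsInto f (Set.Ico a b)) T) {A B C : P} (hA : A ∈ T) (hB : B ∈ T)
    (hC : C ∈ T) (hAB : A ≠ B) (hBC : B ≠ C) : ∠ A B C < b - a ∨ π - (b - a) < ∠ A B C := by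
  have hmem {X : P} (hX : X ∈ T) (hBX : B ≠ X) : f (X -ᵥ B) ∈ angularSector (Set.Ico a b) ∨
      -f (X -ᵥ B) ∈ angularSector (Set.Ico a b) :=
    (hT hB hX hBX).imp_right (segmentPointsInto_swap_iff f).1
  have h := angle_lt_or_lt_angle_of_mem_or_neg_mem_angularSector hab
    (hmem hA hAB.symm) (hmem hC hBC)
  rwa [f.angle_map] at h

theorem nearly_degenerate_subset_general (hV : Module.finrank ℝ V = 2) {m n : ℕ} (hm : m ≠ 0)
    {S : Finset P} (hS : n ^ m < S.card) :
    ∃ T ⊆ S, T.card = n + 1 ∧ ∀ A ∈ T, ∀ B ∈ T, ∀ C ∈ T, A ≠ B → B ≠ C →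
      ∠ A B C < π / m ∨ π - π / m < ∠ A B C := by
  have : FiniteDimensional ℝ V := .of_finrank_pos (hV ▸ two_pos)
  let f : V →ₗᵢ[ℝ] ℂ := (Complex.isometryOfOrthonormal
    ((stdOrthonormalBasis ℝ V).reindex (finCongr hV))).symm.toLinearIsometry
  have horder (i : Fin m) : IsStrictOrder P (SegmentPointsInto f (angularBin m i)) :=
    isStrictOrder_segmentPointsInto f (iUnion_angularBin hm ▸ Set.subset_iUnion _ i)
  obtain ⟨i, T, hTS, hTcard, hT⟩ := exists_isChain_of_prod_lt_card
    (fun i => SegmentPointsInto f (angularBin m i))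
    (fun A _ B _ hAB => exists_segmentPointsInto_angularBin f hm hAB)
    (n := fun _ => n) (by simpa using hS)
  refine ⟨T, hTS, hTcard, fun A hA B hB C hC hAB hBC => ?_⟩
  have hwidth : ((i : ℝ) + 1) * (π / m) - i * (π / m) = π / m := by ring
  have hwidth_le : π / m ≤ π := div_le_self pi_nonneg (mod_cast Nat.one_le_iff_ne_zero.2 hm)
  have h := angle_lt_or_lt_angle_of_isChain f (hwidth.trans_le hwidth_le) hT hA hB hC hAB hBC
  rwa [hwidth] at h

end Points

/-- Quantitative core of Proposition 3.1: any (k−1)^m + 1 points in the plane contain a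
k-subset all of whose angles are within 180°/m of 0° or 180°. -/
theorem nearly_degenerate_subset (m k : ℕ) (hm : 2 ≤ m) (hk : 3 ≤ k)
    (S : Finset (EuclideanSpace ℝ (Fin 2))) (hS : (k - 1) ^ m + 1 ≤ S.card) :
    ∃ T ⊆ S, T.card = k ∧
      ∀ A ∈ T, ∀ B ∈ T, ∀ C ∈ T, A ≠ B → B ≠ C → A ≠ C →
        ∠ A B C ≤ π / m ∨ ∠ A B C ≥ π - π / m := by
  obtain ⟨T, hTS, hTcard, hT⟩ :=
    nearly_degenerate_subset_general finrank_euclideanSpace_fin (by omega : m ≠ 0) hS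
  exact ⟨T, hTS, by omega, fun A hA B hB C hC hAB hBC _ =>
    (hT A hA B hB C hC hAB hBC).imp le_of_lt le_of_lt⟩
end

section
/- There exists a constant C > 0 such that for all integers n ≥ k ≥ 3, every set S of n distinct points in ℝ² contains a subset T ⊆ S with |T| = k such that every angle ∠ABC formed by pairwise distinct A, B, C ∈ T satisfies min(∠ABC, 180° − ∠ABC) ≤ C · log(k)/log(n) degrees. Equivalently, Δ_k(n) ≤ C·log(k)/log(n), where Δ_k(n) = 90° − Γ_k(n). -/
open EuclideanGeometry Real

/-!
Cut the directions of lines in the plane into `r` sectors of width `π / r`. For `r ≥ 2` a sector is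
a cone of half-angle less than `π / 2`, hence closed under addition, so "the vector from `A` to `B`
lies in the `i`-th cone" is a strict order on the points, and any two points are comparable in one
of these `r` orders. By a Mirsky-type pigeonhole argument, more than `m ^ r` points contain a chain
of `m + 1` points for one of the orders, and any two lines through points of such a chain form an
angle of at most `π / r`. Taking `m = k - 1` and `r = ⌊log n / log k⌋` gives the bound, with a
factor `2` lost to the floor.
-/

section ChainRank

variable {α ι : Type*}

open Classical in
/-- The `R`-chains of points of the finite set `S` that all lie strictly below `x`. Defined through
`Finset.powerset` rather than as a `Set` so that their sizes have a maximum. -/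
noncomputable def chainsBelow (R : α → α → Prop) (S : Finset α) (x : α) : Finset (Finset α) :=
  S.powerset.filter fun T : Finset α => IsChain R (T : Set α) ∧ ∀ y ∈ T, R y x

/-- The rank of `x` over the finite set `S`: the largest size of a chain of points of `S` strictly
below `x`, so that minimal elements have rank `0`. -/
noncomputable def chainRank (R : α → α → Prop) (S : Finset α) (x : α) : ℕ :=
  (chainsBelow R S x).sup Finset.card

theorem mem_chainsBelow {R : α → α → Prop} {S T : Finset α} {x : α} :
    T ∈ chainsBelow R S x ↔ T ⊆ S ∧ IsChain R (T : Set α) ∧ ∀ y ∈ T, R y x := by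
  simp only [chainsBelow, Finset.mem_filter, Finset.mem_powerset]

theorem card_le_chainRank {R : α → α → Prop} {S T : Finset α} {x : α}
    (hT : T ∈ chainsBelow R S x) : T.card ≤ chainRank R S x :=
  Finset.le_sup (f := Finset.card) hT

theorem exists_mem_chainsBelow_card_eq_chainRank (R : α → α → Prop) (S : Finset α) (x : α) :
    ∃ T ∈ chainsBelow R S x, T.card = chainRank R S x := by
  have hne : (chainsBelow R S x).Nonempty := ⟨∅, mem_chainsBelow.2 (by simp)⟩
  obtain ⟨T, hT, hcard⟩ := Finset.exists_mem_eq_sup _ hne Finset.card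
  exact ⟨T, hT, hcard.symm⟩

theorem exists_isChain_card_eq_chainRank_add_one (R : α → α → Prop) [Std.Irrefl R]
    {S : Finset α} {x : α} (hx : x ∈ S) :
    ∃ T ⊆ S, IsChain R (T : Set α) ∧ (∀ y ∈ T, y = x ∨ R y x) ∧
      T.card = chainRank R S x + 1 := by
  classical
  obtain ⟨T, hT, hcard⟩ := exists_mem_chainsBelow_card_eq_chainRank R S x
  obtain ⟨hTS, hchain, hTx⟩ := mem_chainsBelow.1 hT
  have hxT : x ∉ T := fun h => irrefl x (hTx x h)
  refine ⟨insert x T, Finset.insert_subset hx hTS, ?_, fun y hy => ?_, ?_⟩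
  · rw [Finset.coe_insert]
    exact hchain.insert fun y hy _ => .inr (hTx y hy)
  · exact (Finset.mem_insert.1 hy).imp_right (hTx y)
  · rw [Finset.card_insert_of_notMem hxT, hcard]

theorem chainRank_lt_chainRank {R : α → α → Prop} [IsStrictOrder α R] {S : Finset α} {x y : α}
    (hx : x ∈ S) (hxy : R x y) : chainRank R S x < chainRank R S y := by
  obtain ⟨T, hTS, hT, hTx, hcard⟩ := exists_isChain_card_eq_chainRank_add_one R hx
  have hTy : ∀ z ∈ T, R z y := fun z hz =>
    (hTx z hz).elim (fun hzx => hzx ▸ hxy) fun hzx => _root_.trans hzx hxy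
  have := card_le_chainRank (mem_chainsBelow.2 ⟨hTS, hT, hTy⟩)
  omega

theorem exists_isChain_of_pow_lt_card [Fintype ι] {m : ℕ} {S : Finset α} (R : ι → α → α → Prop)
    [∀ i, IsStrictOrder α (R i)]
    (hR : (S : Set α).Pairwise fun x y => ∃ i, R i x y ∨ R i y x)
    (hS : m ^ Fintype.card ι < S.card) :
    ∃ i, ∃ T ⊆ S, T.card = m + 1 ∧ IsChain (R i) (T : Set α) := by
  classical
  by_contra! hno
  have rank_lt : ∀ x ∈ S, ∀ i, chainRank (R i) S x < m := by
    intro x hx i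
    by_contra! hm
    obtain ⟨T, hTS, hT, -, hcard⟩ := exists_isChain_card_eq_chainRank_add_one (R i) hx
    obtain ⟨U, hUT, hU⟩ := Finset.exists_subset_card_eq (show m + 1 ≤ T.card by omega)
    exact hno i U (hUT.trans hTS) hU (hT.mono (Finset.coe_subset.2 hUT))
  have ranks_mem : ∀ x ∈ S, (fun i => chainRank (R i) S x) ∈
      Fintype.piFinset fun _ : ι => Finset.range m := fun x hx =>
    Fintype.mem_piFinset.2 fun i => Finset.mem_range.2 (rank_lt x hx i)
  obtain ⟨x, hx, y, hy, hxy, heq⟩ :=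
    Finset.exists_ne_map_eq_of_card_lt_of_maps_to (by simpa using hS) ranks_mem
  obtain ⟨i, h | h⟩ := hR hx hy hxy
  · exact (chainRank_lt_chainRank hx h).ne (congrFun heq i)
  · exact (chainRank_lt_chainRank hy h).ne' (congrFun heq i)

end ChainRank

section LineAngle

variable {V : Type*} [NormedAddCommGroup V] [InnerProductSpace ℝ V]

/-- The angle in `[0, π / 2]` between the lines spanned by `u` and `v`, a measure of how far
`u` and `v` are from being parallel; it is `π / 2` if `u` or `v` is zero. -/
noncomputable def lineAngle (u v : V) : ℝ :=
  min (InnerProductGeometry.angle u v) (π - InnerProductGeometry.angle u v)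

theorem lineAngle_comm (u v : V) : lineAngle u v = lineAngle v u := by
  rw [lineAngle, lineAngle, InnerProductGeometry.angle_comm]

theorem lineAngle_le_iff {u v : V} {δ : ℝ} :
    lineAngle u v ≤ δ ↔
      InnerProductGeometry.angle u v ≤ δ ∨ InnerProductGeometry.angle (-u) v ≤ δ := by
  rw [lineAngle, min_le_iff, InnerProductGeometry.angle_neg_left]

theorem lineAngle_le_pi (u v : V) : lineAngle u v ≤ π :=
  min_le_of_left_le (InnerProductGeometry.angle_le_pi u v)

theorem lineAngle_le_lineAngle_add_lineAngle (u v w : V) :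
    lineAngle u w ≤ lineAngle u v + lineAngle v w := by
  have hpp := InnerProductGeometry.angle_le_angle_add_angle u v w
  have hnp := InnerProductGeometry.angle_le_angle_add_angle (-u) v w
  have hpn := InnerProductGeometry.angle_le_angle_add_angle u v (-w)
  have hnn := InnerProductGeometry.angle_le_angle_add_angle (-u) v (-w)
  simp only [InnerProductGeometry.angle_neg_left, InnerProductGeometry.angle_neg_right]
    at hnp hpn hnn
  unfold lineAngle
  grind

theorem cos_mul_norm_mul_norm_le_inner_of_angle_le {u e : V} {δ : ℝ} (hδ : δ ≤ π)
    (h : InnerProductGeometry.angle u e ≤ δ) : cos δ * (‖u‖ * ‖e‖) ≤ inner ℝ u e := by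
  rw [← InnerProductGeometry.cos_angle_mul_norm_mul_norm u e]
  gcongr
  exact cos_le_cos_of_nonneg_of_le_pi (InnerProductGeometry.angle_nonneg u e) hδ h

theorem ne_zero_of_angle_lt_pi_div_two {u e : V} (h : InnerProductGeometry.angle u e < π / 2) :
    u ≠ 0 ∧ e ≠ 0 := by
  constructor <;> rintro rfl <;> simp at h

theorem angle_add_le {u v e : V} {δ : ℝ} (hδ : δ < π / 2)
    (hu : InnerProductGeometry.angle u e ≤ δ) (hv : InnerProductGeometry.angle v e ≤ δ) :
    InnerProductGeometry.angle (u + v) e ≤ δ := by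
  have hδ₀ : 0 ≤ δ := (InnerProductGeometry.angle_nonneg u e).trans hu
  have hcos : 0 < cos δ := cos_pos_of_mem_Ioo ⟨by linarith [pi_pos], hδ⟩
  obtain ⟨hu₀, he₀⟩ := ne_zero_of_angle_lt_pi_div_two (hu.trans_lt hδ)
  have hinner : cos δ * ((‖u‖ + ‖v‖) * ‖e‖) ≤ inner ℝ (u + v) e := by
    have hu' := cos_mul_norm_mul_norm_le_inner_of_angle_le (by linarith) hu
    have hv' := cos_mul_norm_mul_norm_le_inner_of_angle_le (by linarith) hv
    rw [inner_add_left]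
    linarith
  have huv : u + v ≠ 0 := by
    intro h
    rw [h, inner_zero_left] at hinner
    exact hinner.not_gt (by positivity)
  calc InnerProductGeometry.angle (u + v) e ≤ arccos (cos δ) := by
        refine arccos_le_arccos ((le_div_iff₀ (by positivity)).2 (le_trans ?_ hinner))
        gcongr
        exact norm_add_le u v
    _ = δ := arccos_cos hδ₀ (by linarith)

theorem isStrictOrder_angle_vsub_le {P : Type*} [AddTorsor V P] (e : V) {δ : ℝ}
    (hδ : δ < π / 2) :
    IsStrictOrder P fun A B => InnerProductGeometry.angle (B -ᵥ A) e ≤ δ where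
  irrefl A h := by simp [hδ.not_ge] at h
  trans A B D hAB hBD := by
    rw [← vsub_add_vsub_cancel D B A]
    exact angle_add_le hδ hBD hAB

theorem exists_subset_lineAngle_le_of_cover {P ι : Type*} [AddTorsor V P] [Fintype ι] {δ : ℝ}
    (hδ : δ < π / 2) {e : ι → V}
    (he : ∀ v : V, v ≠ 0 → ∃ i, lineAngle v (e i) ≤ δ) {m : ℕ} {S : Finset P}
    (hS : m ^ Fintype.card ι < S.card) :
    ∃ T ⊆ S, T.card = m + 1 ∧ ∀ A ∈ T, ∀ B ∈ T, ∀ D ∈ T, A ≠ B → B ≠ D →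
      lineAngle (A -ᵥ B) (D -ᵥ B) ≤ 2 * δ := by
  have line_iff (i : ι) (A B : P) : lineAngle (A -ᵥ B) (e i) ≤ δ ↔
      InnerProductGeometry.angle (A -ᵥ B) (e i) ≤ δ ∨
        InnerProductGeometry.angle (B -ᵥ A) (e i) ≤ δ := by
    rw [lineAngle_le_iff, neg_vsub_eq_vsub_rev]
  have := fun i => isStrictOrder_angle_vsub_le (P := P) (e i) hδ
  obtain ⟨i, T, hTS, hT, hchain⟩ := exists_isChain_of_pow_lt_card
    (fun i A B => InnerProductGeometry.angle (B -ᵥ A) (e i) ≤ δ)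
    (fun A _ B _ hAB => (he (B -ᵥ A) (vsub_ne_zero.2 hAB.symm)).imp fun i => (line_iff i B A).1) hS
  have near_axis : ∀ A ∈ T, ∀ B ∈ T, A ≠ B → lineAngle (A -ᵥ B) (e i) ≤ δ :=
    fun A hA B hB hAB => (line_iff i A B).2 (hchain hB hA hAB.symm)
  refine ⟨T, hTS, hT, fun A hA B hB D hD hAB hBD => ?_⟩
  calc lineAngle (A -ᵥ B) (D -ᵥ B)
      ≤ lineAngle (A -ᵥ B) (e i) + lineAngle (D -ᵥ B) (e i) := by
        rw [lineAngle_comm (D -ᵥ B)]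
        exact lineAngle_le_lineAngle_add_lineAngle _ _ _
    _ ≤ δ + δ := add_le_add (near_axis A hA B hB hAB) (near_axis D hD B hB hBD.symm)
    _ = 2 * δ := (two_mul δ).symm

end LineAngle

theorem exists_abs_sub_odd_mul_le {K : Type*} [Field K] [LinearOrder K] [IsStrictOrderedRing K]
    [FloorSemiring K] {r : ℕ} {δ x : K} (hδ : 0 < δ) (hx₀ : 0 < x) (hx : x ≤ r * (2 * δ)) :
    ∃ i : Fin r, |x - (2 * (i : ℕ) + 1) * δ| ≤ δ := by
  have hr : ⌈x / (2 * δ)⌉₊ ≤ r := by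
    rwa [Nat.ceil_le, div_le_iff₀ (by positivity)]
  obtain ⟨i, hi⟩ := Nat.exists_eq_add_one.2 (Nat.ceil_pos.2 (div_pos hx₀ (mul_pos two_pos hδ)))
  obtain ⟨hlt, hle⟩ := (Nat.ceil_eq_iff i.succ_ne_zero).1 hi
  rw [Nat.succ_sub_one, lt_div_iff₀ (by positivity)] at hlt
  rw [div_le_iff₀ (by positivity), Nat.cast_succ] at hle
  refine ⟨⟨i, by omega⟩, abs_le.2 ⟨?_, ?_⟩⟩ <;> dsimp only <;> linarith

section Plane

variable {V : Type*} [NormedAddCommGroup V] [InnerProductSpace ℝ V]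
  [Fact (Module.finrank ℝ V = 2)]

theorem angle_rotation_le_of_oangle_eq (o : Orientation ℝ V (Fin 2)) {e v : V} (he : e ≠ 0)
    (hv : v ≠ 0) {x φ δ : ℝ} (hx : o.oangle e v = x) (hφ : |x - φ| ≤ δ) (hδ : δ < π) :
    InnerProductGeometry.angle v (o.rotation φ e) ≤ δ := by
  have hrot : o.rotation φ e ≠ 0 := (o.rotation φ).map_eq_zero_iff.not.2 he
  have htoReal : ((x - φ : ℝ) : Real.Angle).toReal = x - φ :=
    Real.Angle.toReal_coe_eq_self_iff.2 (by grind)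
  rwa [InnerProductGeometry.angle_comm, o.angle_eq_abs_oangle_toReal hrot hv,
    o.oangle_rotation_left he hv, hx, ← Real.Angle.coe_sub, htoReal]

theorem exists_lineAngle_rotation_le (o : Orientation ℝ V (Fin 2)) {e v : V} (he : e ≠ 0)
    (hv : v ≠ 0) {r : ℕ} (hr : r ≠ 0) :
    ∃ i : Fin r, lineAngle v (o.rotation ((2 * (i : ℕ) + 1) * (π / (2 * r)) : ℝ) e) ≤
      π / (2 * r) := by
  have hδ : 0 < π / (2 * r) := by positivity
  have hrδ : r * (2 * (π / (2 * r))) = π := by field_simp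
  have hδπ : π / (2 * r) < π := div_lt_self pi_pos (by exact_mod_cast (by omega : 1 < 2 * r))
  set x := (o.oangle e v).toReal with hx
  obtain ⟨hx₁, hx₂⟩ := Real.Angle.toReal_mem_Ioc (o.oangle e v)
  rcases lt_or_ge 0 x with hpos | hneg
  · obtain ⟨i, hi⟩ := exists_abs_sub_odd_mul_le (r := r) hδ hpos (by linarith)
    have hev : o.oangle e v = x := (Real.Angle.coe_toReal _).symm
    exact ⟨i, lineAngle_le_iff.2 (.inl (angle_rotation_le_of_oangle_eq o he hv hev hi hδπ))⟩
  · obtain ⟨i, hi⟩ := exists_abs_sub_odd_mul_le (r := r) (x := x + π) hδ (by linarith) (by linarith)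
    have hev : o.oangle e (-v) = (x + π : ℝ) := by
      rw [o.oangle_neg_right he hv, Real.Angle.coe_add, hx, Real.Angle.coe_toReal]
    exact ⟨i, lineAngle_le_iff.2
      (.inr (angle_rotation_le_of_oangle_eq o he (neg_ne_zero.2 hv) hev hi hδπ))⟩

variable (V) in
theorem exists_lineAngle_cover {r : ℕ} (hr : r ≠ 0) :
    ∃ e : Fin r → V, ∀ v : V, v ≠ 0 → ∃ i, lineAngle v (e i) ≤ π / (2 * r) := by
  have hV : Module.finrank ℝ V = 2 := Fact.out
  have : FiniteDimensional ℝ V := .of_fact_finrank_eq_two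
  have : Nontrivial V := Module.nontrivial_of_finrank_pos (R := ℝ) (by omega)
  obtain ⟨a, ha⟩ := exists_ne (0 : V)
  have o : Orientation ℝ V (Fin 2) := (Module.finBasisOfFinrankEq ℝ V hV).orientation
  exact ⟨_, fun v hv => exists_lineAngle_rotation_le o ha hv hr⟩

theorem exists_subset_lineAngle_le_pi_div {P : Type*} [AddTorsor V P] {r m : ℕ} (hr : r ≠ 0)
    {S : Finset P} (hS : m ^ r < S.card) :
    ∃ T ⊆ S, T.card = m + 1 ∧ ∀ A ∈ T, ∀ B ∈ T, ∀ D ∈ T, A ≠ B → B ≠ D →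
      lineAngle (A -ᵥ B) (D -ᵥ B) ≤ π / r := by
  obtain rfl | hr₂ : r = 1 ∨ 2 ≤ r := by omega
  · obtain ⟨T, hTS, hT⟩ := Finset.exists_subset_card_eq (show m + 1 ≤ S.card by simpa using hS)
    exact ⟨T, hTS, hT, fun A _ B _ D _ _ _ => by simpa using lineAngle_le_pi (A -ᵥ B) (D -ᵥ B)⟩
  · obtain ⟨e, he⟩ := exists_lineAngle_cover V hr
    have hδ : π / (2 * r) < π / 2 :=
      div_lt_div_of_pos_left pi_pos two_pos (by exact_mod_cast (by omega : 2 < 2 * r))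
    have htwo : 2 * (π / (2 * r)) = π / r := by field_simp
    exact htwo ▸ exists_subset_lineAngle_le_of_cover hδ he (by simpa using hS)

end Plane

theorem inv_natLog_le_two_mul_log_div_log {k n : ℕ} (hk : 1 < k) (hkn : k ≤ n) :
    (Nat.log k n : ℝ)⁻¹ ≤ 2 * log k / log n := by
  have hlogk : 0 < log k := log_pos (by exact_mod_cast hk)
  have hlogn : 0 < log n := log_pos (by exact_mod_cast hk.trans_le hkn)
  have hr : (1 : ℝ) ≤ Nat.log k n := by exact_mod_cast Nat.log_pos hk hkn
  have hfloor : log n / log k < Nat.log k n + 1 := by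
    rw [← natFloor_logb_natCast]
    exact Nat.lt_floor_add_one _
  rw [inv_le_comm₀ (by positivity) (by positivity), inv_div, mul_comm, ← div_div]
  linarith

theorem delta_upper_bound_general {V P : Type*} [NormedAddCommGroup V] [InnerProductSpace ℝ V]
    [Fact (Module.finrank ℝ V = 2)] [MetricSpace P] [NormedAddTorsor V P] {k : ℕ} {S : Finset P}
    (hk : 1 < k) (hkS : k ≤ S.card) :
    ∃ T ⊆ S, T.card = k ∧ ∀ A ∈ T, ∀ B ∈ T, ∀ D ∈ T, A ≠ B → B ≠ D →
      min (∠ A B D) (π - ∠ A B D) ≤ 2 * π * log k / log S.card := by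
  have hr : Nat.log k S.card ≠ 0 := (Nat.log_pos hk hkS).ne'
  have hpow : (k - 1) ^ Nat.log k S.card < S.card :=
    (Nat.pow_lt_pow_left (by omega) hr).trans_le (Nat.pow_log_le_self k (by omega))
  obtain ⟨T, hTS, hT, hangle⟩ := exists_subset_lineAngle_le_pi_div hr hpow
  refine ⟨T, hTS, by omega, fun A hA B hB D hD hAB hBD => ?_⟩
  calc min (∠ A B D) (π - ∠ A B D) = lineAngle (A -ᵥ B) (D -ᵥ B) := rfl
    _ ≤ π * (Nat.log k S.card : ℝ)⁻¹ := hangle A hA B hB D hD hAB hBD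
    _ ≤ π * (2 * log k / log S.card) := by
        gcongr
        exact inv_natLog_le_two_mul_log_div_log hk hkS
    _ = 2 * π * log k / log S.card := by ring

/-- **Proposition 3.1 (Δ_k(n) ≤ C·log k / log n).** There is a constant C > 0 such that any
n ≥ k ≥ 3 points in the plane contain a k-subset all of whose angles are within
C·log(k)/log(n) of 0° or 180°. -/
theorem delta_upper_bound :
    ∃ C : ℝ, 0 < C ∧ ∀ n k : ℕ, 3 ≤ k → k ≤ n →
      ∀ S : Finset (EuclideanSpace ℝ (Fin 2)), S.card = n →
        ∃ T ⊆ S, T.card = k ∧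
          ∀ A ∈ T, ∀ B ∈ T, ∀ D ∈ T, A ≠ B → B ≠ D → A ≠ D →
            min (∠ A B D) (π - ∠ A B D) ≤ C * Real.log k / Real.log n := by
  refine ⟨2 * π, by positivity, fun n k hk hkn S hS => ?_⟩
  have : Fact (Module.finrank ℝ (EuclideanSpace ℝ (Fin 2)) = 2) := ⟨finrank_euclideanSpace_fin⟩
  subst hS
  obtain ⟨T, hTS, hT, hangle⟩ := delta_upper_bound_general (by omega : 1 < k) hkn
  exact ⟨T, hTS, hT, fun A hA B hB D hD hAB hBD _ => hangle A hA B hB D hD hAB hBD⟩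
end

section
/- There exists a constant C′ > 0 such that for all integers n ≥ k ≥ 3, there exists a set S of n distinct points in ℝ² such that every subset T ⊆ S with |T| = k contains pairwise distinct points A, B, C with C′·log(k)/log(n) ≤ ∠ABC ≤ 180° − C′·log(k)/log(n) (in degrees). Equivalently, Δ_k(n) ≥ C′·log(k)/log(n), where Δ_k(n) = 90° − Γ_k(n). -/
open EuclideanGeometry Real

/-!
Encode binary vectors by the sets of positions of their ones. If `j` is the largest position at
which `A` and `B` differ, then for large `R` the term of index `j` dominates `P_A - P_B`, whose
slope is therefore `j / t` up to `1 / (4t)`. In a family of more than `2 ^ m` vectors, let `a` be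
the largest position at which not all of them agree. By pigeonhole two members `B` and `D` agree at
the `m` positions ending at `a`, and some member `A` differs from `B` at `a`. The slopes of
`P_A - P_B` and `P_D - P_B` thus differ by about `m / t` or more, and the sine of the angle between
two vectors with slopes in `[-1, 1]` is at least half the difference of their slopes.
-/

open scoped symmDiff

section SumDifference

variable {ι E : Type*} [DecidableEq ι] [SeminormedAddCommGroup E] (f : ι → E)

theorem norm_sum_sub_sum_le_sum_symmDiff (A B : Finset ι) :
    ‖∑ i ∈ A, f i - ∑ i ∈ B, f i‖ ≤ ∑ i ∈ A ∆ B, ‖f i‖ := by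
  rw [← Finset.sum_sdiff_sub_sum_sdiff, symmDiff_def, Finset.sup_eq_union,
    Finset.sum_union disjoint_sdiff_sdiff]
  exact (norm_sub_le _ _).trans (add_le_add (norm_sum_le _ _) (norm_sum_le _ _))

theorem norm_le_norm_sum_sub_sum_add_sum_erase {A B : Finset ι} {j : ι} (hj : j ∈ A ∆ B) :
    ‖f j‖ ≤ ‖∑ i ∈ A, f i - ∑ i ∈ B, f i‖ + ∑ i ∈ (A ∆ B).erase j, ‖f i‖ := by
  wlog hjA : j ∈ A generalizing A B
  · rw [norm_sub_rev, symmDiff_comm]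
    exact this (symmDiff_comm A B ▸ hj) (by grind [Finset.mem_symmDiff])
  have herase : (A.erase j) ∆ B = (A ∆ B).erase j := by
    ext i
    grind [Finset.mem_symmDiff]
  have hrest := norm_sum_sub_sum_le_sum_symmDiff f (A.erase j) B
  rw [herase] at hrest
  have hsplit : f j = (∑ i ∈ A, f i - ∑ i ∈ B, f i)
      - (∑ i ∈ A.erase j, f i - ∑ i ∈ B, f i) := by
    rw [← Finset.add_sum_erase A f hjA]
    abel
  rw [hsplit]
  exact (norm_sub_le _ _).trans (by gcongr)

end SumDifference

section TopDifference

variable {ι : Type*} [LinearOrder ι]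

theorem exists_isGreatest_symmDiff {A B : Finset ι} (h : A ≠ B) :
    ∃ j, IsGreatest (↑(A ∆ B) : Set ι) j :=
  ⟨_, (A ∆ B).isGreatest_max' (Finset.nonempty_iff_ne_empty.mpr (symmDiff_eq_bot.not.mpr h))⟩

theorem exists_max_mem_symmDiff {T : Finset (Finset ι)} (hT : 1 < T.card) :
    ∃ a, (∃ A ∈ T, ∃ A' ∈ T, a ∈ A ∆ A') ∧ ∀ A ∈ T, ∀ A' ∈ T, ∀ i ∈ A ∆ A', i ≤ a := by
  let J := T.biUnion fun A => T.biUnion fun A' => A ∆ A'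
  have mem_J {i : ι} : i ∈ J ↔ ∃ A ∈ T, ∃ A' ∈ T, i ∈ A ∆ A' := by
    simp only [J, Finset.mem_biUnion]
  obtain ⟨A, hA, A', hA', hne⟩ := Finset.one_lt_card.mp hT
  obtain ⟨j, hj, -⟩ := exists_isGreatest_symmDiff hne
  have hJ : J.Nonempty := ⟨j, mem_J.mpr ⟨A, hA, A', hA', hj⟩⟩
  exact ⟨J.max' hJ, mem_J.mp (J.max'_mem hJ), fun A hA A' hA' i hi =>
    J.le_max' i (mem_J.mpr ⟨A, hA, A', hA', hi⟩)⟩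

theorem exists_isGreatest_symmDiff_add_le {T : Finset (Finset ℕ)} {m : ℕ} (hT : 2 ^ m < T.card) :
    ∃ A ∈ T, ∃ B ∈ T, ∃ D ∈ T, ∃ a b, IsGreatest (↑(A ∆ B) : Set ℕ) a ∧
      IsGreatest (↑(D ∆ B) : Set ℕ) b ∧ b + m ≤ a := by
  obtain ⟨a, ⟨A, hA, A', hA', haA⟩, ha⟩ :=
    exists_max_mem_symmDiff (Nat.one_le_two_pow.trans_lt hT)
  let W := Finset.Ico (a + 1 - m) (a + 1)
  have hW : W.powerset.card < T.card := by
    rw [Finset.card_powerset, Nat.card_Ico]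
    exact (Nat.pow_le_pow_right two_pos (by lia)).trans_lt hT
  obtain ⟨D, hD, B, hB, hDB, hagree⟩ := Finset.exists_ne_map_eq_of_card_lt_of_maps_to hW
    (f := (· ∩ W)) fun _ _ => Finset.mem_powerset.mpr Finset.inter_subset_right
  obtain ⟨b, hb⟩ := exists_isGreatest_symmDiff hDB
  have hba : b + m ≤ a := by
    have hb_le : b ≤ a := ha D hD B hB b hb.1
    have hbW : b ∉ W := by
      intro hbW
      have hiff : b ∈ D ↔ b ∈ B := by simpa [hbW] using congrArg (b ∈ ·) hagree
      have hb_mem := Finset.mem_symmDiff.mp hb.1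
      tauto
    rw [Finset.mem_Ico] at hbW
    lia
  rcases Finset.mem_union.mp (symmDiff_triangle A B A' haA) with h | h
  · exact ⟨A, hA, B, hB, D, hD, a, b, ⟨h, ha A hA B hB⟩, hb, hba⟩
  · rw [symmDiff_comm] at h
    exact ⟨A', hA', B, hB, D, hD, a, b, ⟨h, ha A' hA' B hB⟩, hb, hba⟩

end TopDifference

theorem sub_one_sq_mul_sum_range_sub_mul_pow {S : Type*} [CommRing S] (x : S) (n : ℕ) :
    (x - 1) ^ 2 * ∑ i ∈ Finset.range n, ((n : S) - i) * x ^ i =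
      x ^ (n + 1) - (n + 1) * x + n := by
  induction n with
  | zero => simp
  | succ n ih =>
    have hshift : ∑ i ∈ Finset.range (n + 1), (((n + 1 : ℕ) : S) - i) * x ^ i =
        x * ∑ i ∈ Finset.range n, ((n : S) - i) * x ^ i + (n + 1) := by
      rw [Finset.sum_range_succ', Finset.mul_sum]
      congr 1
      · refine Finset.sum_congr rfl fun i _ => ?_
        push_cast
        ring
      · simp
    rw [hshift, mul_add, mul_left_comm, ih]
    push_cast
    ring

section Angle

theorem sin_angle_mul_norm_mul_norm_eq_abs_cross (u v : EuclideanSpace ℝ (Fin 2)) :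
    sin (InnerProductGeometry.angle u v) * (‖u‖ * ‖v‖) = |u 0 * v 1 - u 1 * v 0| := by
  rw [InnerProductGeometry.sin_angle_mul_norm_mul_norm, ← Real.sqrt_sq_eq_abs]
  congr 1
  simp only [PiLp.inner_apply, Fin.sum_univ_two, RCLike.inner_apply, conj_trivial]
  ring

variable {u v : EuclideanSpace ℝ (Fin 2)}

theorem norm_le_sqrt_two_mul_abs_of_abs_slope_le_one (hu0 : u 0 ≠ 0) (hu : |u 1 / u 0| ≤ 1) :
    ‖u‖ ≤ √2 * |u 0| := by
  rw [abs_div, div_le_one (abs_pos.mpr hu0), ← sq_le_sq] at hu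
  rw [EuclideanSpace.norm_eq, Fin.sum_univ_two, Real.norm_eq_abs, Real.norm_eq_abs, sq_abs, sq_abs,
    ← Real.sqrt_sq_eq_abs, ← Real.sqrt_mul zero_le_two]
  gcongr
  linarith

theorem abs_slope_sub_slope_div_two_le_sin_angle (hu0 : u 0 ≠ 0) (hv0 : v 0 ≠ 0)
    (hu : |u 1 / u 0| ≤ 1) (hv : |v 1 / v 0| ≤ 1) :
    |u 1 / u 0 - v 1 / v 0| / 2 ≤ sin (InnerProductGeometry.angle u v) := by
  have hnorm : ‖u‖ * ‖v‖ ≤ 2 * (|u 0| * |v 0|) :=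
    calc ‖u‖ * ‖v‖ ≤ (√2 * |u 0|) * (√2 * |v 0|) := by
          gcongr
          · exact norm_le_sqrt_two_mul_abs_of_abs_slope_le_one hu0 hu
          · exact norm_le_sqrt_two_mul_abs_of_abs_slope_le_one hv0 hv
      _ = 2 * (|u 0| * |v 0|) := by rw [mul_mul_mul_comm, Real.mul_self_sqrt zero_le_two]
  have hcross : |u 0 * v 1 - u 1 * v 0| = |u 1 / u 0 - v 1 / v 0| * (|u 0| * |v 0|) := by
    rw [abs_sub_comm, ← abs_mul, ← abs_mul]
    congr 1
    field_simp
  have hpos : 0 < 2 * (|u 0| * |v 0|) := by positivity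
  refine le_of_mul_le_mul_right ?_ hpos
  calc |u 1 / u 0 - v 1 / v 0| / 2 * (2 * (|u 0| * |v 0|))
      = sin (InnerProductGeometry.angle u v) * (‖u‖ * ‖v‖) := by
        rw [sin_angle_mul_norm_mul_norm_eq_abs_cross, hcross]
        ring
    _ ≤ sin (InnerProductGeometry.angle u v) * (2 * (|u 0| * |v 0|)) := by
        gcongr
        exact InnerProductGeometry.sin_angle_nonneg u v

theorem le_and_le_pi_sub_of_le_sin {c θ : ℝ} (h0 : 0 ≤ θ) (hπ : θ ≤ π) (h : c ≤ sin θ) :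
    c ≤ θ ∧ θ ≤ π - c :=
  ⟨h.trans (Real.sin_le h0),
    le_sub_comm.mp (h.trans (Real.sin_pi_sub θ ▸ Real.sin_le (sub_nonneg.mpr hπ)))⟩

end Angle

/-- The Szekeres point attached to the set `A` of positions of the ones of a binary vector `v`.
The directions `e ^ (iπj/t)` of the paper are replaced by the vectors `(1, j/t)`, so that angles are
estimated through slopes rather than arguments. -/
noncomputable def szekeresPoint (R : ℝ) (t : ℕ) (A : Finset ℕ) : EuclideanSpace ℝ (Fin 2) :=
  ∑ i ∈ A, R ^ i • !₂[1, (i : ℝ) / t]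

section Szekeres

variable {R : ℝ} {t j : ℕ} {A B : Finset ℕ}

theorem szekeresPoint_apply_zero : szekeresPoint R t A 0 = ∑ i ∈ A, R ^ i := by
  simp [szekeresPoint]

theorem szekeresPoint_apply_one : szekeresPoint R t A 1 = ∑ i ∈ A, R ^ i * (i / t) := by
  simp [szekeresPoint]

theorem mul_pow_lt_mul_abs_szekeresPoint_sub (hR : 1 ≤ R)
    (hj : IsGreatest (↑(A ∆ B) : Set ℕ) j) :
    (R - 2) * R ^ j < (R - 1) * |(szekeresPoint R t A - szekeresPoint R t B) 0| := by
  have hlower : (A ∆ B).erase j ⊆ Finset.range j := fun i hi =>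
    Finset.mem_range.mpr ((hj.2 (Finset.mem_of_mem_erase hi)).lt_of_ne (Finset.ne_of_mem_erase hi))
  have hpow : R ^ j ≤ |(szekeresPoint R t A - szekeresPoint R t B) 0| +
      ∑ i ∈ Finset.range j, R ^ i := by
    have hsum := norm_le_norm_sum_sub_sum_add_sum_erase (R ^ ·) hj.1
    simp only [Real.norm_eq_abs, abs_of_pos (pow_pos (one_pos.trans_le hR) _)] at hsum
    rw [PiLp.sub_apply, szekeresPoint_apply_zero, szekeresPoint_apply_zero]
    grw [hsum, hlower]
  have hgeom := mul_geom_sum R j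
  nlinarith

theorem sub_one_sq_mul_abs_szekeresPoint_sub_le (hR : 1 ≤ R)
    (hj : IsGreatest (↑(A ∆ B) : Set ℕ) j) :
    (R - 1) ^ 2 * |(szekeresPoint R t A - szekeresPoint R t B) 1 -
      j / t * (szekeresPoint R t A - szekeresPoint R t B) 0| ≤ R ^ (j + 1) / t := by
  -- Subtracting `j / t` times the abscissa kills the leading term `i = j`.
  let f (i : ℕ) : ℝ := R ^ i * (i / t) - j / t * R ^ i
  have hf : (szekeresPoint R t A - szekeresPoint R t B) 1 -
      j / t * (szekeresPoint R t A - szekeresPoint R t B) 0 =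
        ∑ i ∈ A, f i - ∑ i ∈ B, f i := by
    simp only [f, PiLp.sub_apply, szekeresPoint_apply_zero, szekeresPoint_apply_one,
      Finset.sum_sub_distrib, ← Finset.mul_sum]
    ring
  have hnorm {i : ℕ} (hi : i ∈ Finset.range (j + 1)) : ‖f i‖ = (j - i) * R ^ i / t := by
    have hij : (i : ℝ) ≤ j := by exact_mod_cast Finset.mem_range_succ_iff.mp hi
    have hterm : 0 ≤ (j - i) * R ^ i / t :=
      div_nonneg (mul_nonneg (sub_nonneg.mpr hij) (by positivity)) (by positivity)
    rw [Real.norm_eq_abs, abs_sub_comm, ← abs_of_nonneg hterm]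
    congr 1
    ring
  have hupper : A ∆ B ⊆ Finset.range (j + 1) := fun i hi =>
    Finset.mem_range_succ_iff.mpr (hj.2 hi)
  have hsum : ‖∑ i ∈ A, f i - ∑ i ∈ B, f i‖ ≤
      (∑ i ∈ Finset.range j, ((j : ℝ) - i) * R ^ i) / t :=
    calc _ ≤ ∑ i ∈ A ∆ B, ‖f i‖ := norm_sum_sub_sum_le_sum_symmDiff f A B
      _ ≤ ∑ i ∈ Finset.range (j + 1), ‖f i‖ :=
        Finset.sum_le_sum_of_subset_of_nonneg hupper fun _ _ _ => norm_nonneg _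
      _ = ∑ i ∈ Finset.range (j + 1), ((j : ℝ) - i) * R ^ i / t :=
        Finset.sum_congr rfl fun _ => hnorm
      _ = (∑ i ∈ Finset.range j, ((j : ℝ) - i) * R ^ i) / t := by
        rw [Finset.sum_range_succ, sub_self, zero_mul, zero_div, add_zero, Finset.sum_div]
  rw [hf, ← Real.norm_eq_abs]
  grw [hsum]
  rw [← mul_div_assoc, sub_one_sq_mul_sum_range_sub_mul_pow]
  gcongr
  nlinarith [Nat.cast_nonneg (α := ℝ) j]

theorem szekeresPoint_sub_apply_zero_ne_zero (hR : 2 ≤ R)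
    (hj : IsGreatest (↑(A ∆ B) : Set ℕ) j) :
    (szekeresPoint R t A - szekeresPoint R t B) 0 ≠ 0 := by
  intro h
  have hlt := mul_pow_lt_mul_abs_szekeresPoint_sub (t := t) (one_le_two.trans hR) hj
  rw [h, abs_zero, mul_zero] at hlt
  exact hlt.not_ge (mul_nonneg (sub_nonneg.mpr hR) (by positivity))

theorem szekeresPoint_injective (hR : 2 ≤ R) (t : ℕ) : Function.Injective (szekeresPoint R t) := by
  intro A B h
  by_contra hAB
  obtain ⟨j, hj⟩ := exists_isGreatest_symmDiff hAB
  exact szekeresPoint_sub_apply_zero_ne_zero (t := t) hR hj (by simp [h])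

theorem abs_slope_szekeresPoint_sub_le (hR : 7 ≤ R) (hj : IsGreatest (↑(A ∆ B) : Set ℕ) j) :
    |(szekeresPoint R t A - szekeresPoint R t B) 1 /
      (szekeresPoint R t A - szekeresPoint R t B) 0 - j / t| ≤ 1 / 4 / t := by
  have hx := szekeresPoint_sub_apply_zero_ne_zero (R := R) (t := t) (by linarith) hj
  have hlower := mul_pow_lt_mul_abs_szekeresPoint_sub (R := R) (t := t) (by linarith) hj
  have hupper := sub_one_sq_mul_abs_szekeresPoint_sub_le (R := R) (t := t) (by linarith) hj
  set x := (szekeresPoint R t A - szekeresPoint R t B) 0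
  set y := (szekeresPoint R t A - szekeresPoint R t B) 1
  rw [div_sub' hx, abs_div, div_le_iff₀ (abs_pos.mpr hx), mul_comm x]
  have hR1 : 0 < R - 1 := by linarith
  have hR_le : R ≤ (R - 1) * (R - 2) / 4 := by nlinarith
  refine le_of_mul_le_mul_left ?_ (pow_pos hR1 2)
  calc (R - 1) ^ 2 * |y - j / t * x| ≤ R * R ^ j / t := by rwa [pow_succ' R] at hupper
    _ ≤ (R - 1) * (R - 2) / 4 * R ^ j / t := by gcongr
    _ = (R - 1) / 4 / t * ((R - 2) * R ^ j) := by ring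
    _ ≤ (R - 1) / 4 / t * ((R - 1) * |x|) := by gcongr
    _ = (R - 1) ^ 2 * (1 / 4 / t * |x|) := by ring

theorem abs_slope_szekeresPoint_sub_le_one (hR : 7 ≤ R)
    (hj : IsGreatest (↑(A ∆ B) : Set ℕ) j) (hjt : j < t) :
    |(szekeresPoint R t A - szekeresPoint R t B) 1 /
      (szekeresPoint R t A - szekeresPoint R t B) 0| ≤ 1 := by
  have hjt' : (j : ℝ) + 1 ≤ t := by exact_mod_cast hjt
  have ht : (0 : ℝ) < t := by linarith [Nat.cast_nonneg (α := ℝ) j]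
  have habs := abs_sub_abs_le_abs_sub ((szekeresPoint R t A - szekeresPoint R t B) 1 /
      (szekeresPoint R t A - szekeresPoint R t B) 0) (j / t)
  grw [abs_slope_szekeresPoint_sub_le hR hj, abs_of_nonneg (by positivity : (0 : ℝ) ≤ j / t),
    sub_le_iff_le_add, ← add_div] at habs
  exact habs.trans ((div_le_one ht).mpr (by linarith))

theorem le_sin_angle_szekeresPoint {a b : ℕ} {D : Finset ℕ} (hR : 7 ≤ R)
    (hAB : IsGreatest (↑(A ∆ B) : Set ℕ) a) (hDB : IsGreatest (↑(D ∆ B) : Set ℕ) b)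
    (hba : b < a) (hat : a < t) :
    ((a : ℝ) - b) / (4 * t) ≤
      sin (∠ (szekeresPoint R t A) (szekeresPoint R t B) (szekeresPoint R t D)) := by
  have hba' : (b : ℝ) + 1 ≤ a := by exact_mod_cast hba
  have hA := abs_slope_szekeresPoint_sub_le (t := t) hR hAB
  have hD := abs_slope_szekeresPoint_sub_le (t := t) hR hDB
  have hsin := abs_slope_sub_slope_div_two_le_sin_angle
    (szekeresPoint_sub_apply_zero_ne_zero (by linarith) hAB)
    (szekeresPoint_sub_apply_zero_ne_zero (by linarith) hDB)
    (abs_slope_szekeresPoint_sub_le_one hR hAB hat)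
    (abs_slope_szekeresPoint_sub_le_one hR hDB (hba.trans hat))
  refine le_trans ?_ hsin
  set s := (szekeresPoint R t A - szekeresPoint R t B) 1 /
    (szekeresPoint R t A - szekeresPoint R t B) 0
  set s' := (szekeresPoint R t D - szekeresPoint R t B) 1 /
    (szekeresPoint R t D - szekeresPoint R t B) 0
  calc ((a : ℝ) - b) / (4 * t) = (a - b) / 2 / t / 2 := by ring
    _ ≤ (a - b - 1 / 2) / t / 2 := by
        gcongr
        linarith
    _ = (a / t - 1 / 4 / t - (b / t + 1 / 4 / t)) / 2 := by ring
    _ ≤ (s - s') / 2 := by linarith [(abs_le.mp hA).1, (abs_le.mp hD).2]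
    _ ≤ |s - s'| / 2 := by
        gcongr
        exact le_abs_self _

theorem exists_le_angle_szekeresPoint {m : ℕ} {T : Finset (Finset ℕ)} (hR : 7 ≤ R) (hm : 1 ≤ m)
    (hTt : ∀ A ∈ T, A ⊆ Finset.range t) (hT : 2 ^ m < T.card) :
    ∃ A ∈ T, ∃ B ∈ T, ∃ D ∈ T, A ≠ B ∧ B ≠ D ∧ A ≠ D ∧
      (m : ℝ) / (4 * t) ≤ ∠ (szekeresPoint R t A) (szekeresPoint R t B) (szekeresPoint R t D) ∧
      ∠ (szekeresPoint R t A) (szekeresPoint R t B) (szekeresPoint R t D) ≤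
        π - (m : ℝ) / (4 * t) := by
  obtain ⟨A, hA, B, hB, D, hD, a, b, hAB, hDB, hba⟩ := exists_isGreatest_symmDiff_add_le hT
  have hlt : b < a := by lia
  have hat : a < t := by
    have haAB : a ∈ A ∪ B := (symmDiff_le_sup : A ∆ B ≤ A ∪ B) hAB.1
    exact Finset.mem_range.mp (Finset.union_subset (hTt A hA) (hTt B hB) haAB)
  have hsin : (m : ℝ) / (4 * t) ≤
      sin (∠ (szekeresPoint R t A) (szekeresPoint R t B) (szekeresPoint R t D)) := by
    refine le_trans ?_ (le_sin_angle_szekeresPoint hR hAB hDB hlt hat)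
    gcongr
    rw [le_sub_iff_add_le']
    exact_mod_cast hba
  refine ⟨A, hA, B, hB, D, hD, ?_, ?_, ?_,
    le_and_le_pi_sub_of_le_sin (angle_nonneg _ _ _) (angle_le_pi _ _ _) hsin⟩
  · rintro rfl
    simpa using hAB.1
  · rintro rfl
    simpa using hDB.1
  · rintro rfl
    exact hlt.ne (hDB.unique hAB)

end Szekeres

section Clog

theorem logb_two_le_two_mul_clog_sub_one {k : ℕ} (hk : 2 < k) :
    logb 2 k ≤ 2 * ((Nat.clog 2 k - 1 : ℕ) : ℝ) := by
  have hclog : 1 < Nat.clog 2 k := (Nat.lt_clog_iff_pow_lt one_lt_two).mpr (by simpa using hk)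
  calc logb 2 k ≤ Nat.clog 2 k := by
        rw [← Real.natCeil_logb_natCast, Nat.cast_ofNat]
        exact Nat.le_ceil _
    _ ≤ 2 * ((Nat.clog 2 k - 1 : ℕ) : ℝ) := by
        exact_mod_cast (by lia : Nat.clog 2 k ≤ 2 * (Nat.clog 2 k - 1))

theorem clog_two_le_two_mul_logb {n : ℕ} (hn : 2 ≤ n) : (Nat.clog 2 n : ℝ) ≤ 2 * logb 2 n := by
  have hlogb : 1 ≤ logb 2 n := by
    rw [Real.le_logb_iff_rpow_le one_lt_two (by positivity), Real.rpow_one]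
    exact_mod_cast hn
  have hceil := Nat.ceil_lt_add_one (zero_le_one.trans hlogb)
  have hclog := Real.natCeil_logb_natCast 2 n
  rw [Nat.cast_ofNat] at hclog
  rw [hclog] at hceil
  linarith

theorem log_div_log_le_clog_sub_one_div_clog {n k : ℕ} (hk : 2 < k) (hn : 2 ≤ n) :
    1 / 16 * Real.log k / Real.log n ≤ ((Nat.clog 2 k - 1 : ℕ) : ℝ) / (4 * Nat.clog 2 n) := by
  have hclog : (0 : ℝ) < Nat.clog 2 n := by exact_mod_cast Nat.clog_pos one_lt_two hn
  have hn' := clog_two_le_two_mul_logb hn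
  calc 1 / 16 * Real.log k / Real.log n = 1 / 16 * (logb 2 k / logb 2 n) := by
        rw [logb, logb, div_div_div_cancel_right₀ (by positivity), mul_div_assoc]
    _ ≤ 1 / 16 * (2 * ((Nat.clog 2 k - 1 : ℕ) : ℝ) / (Nat.clog 2 n / 2)) := by
        gcongr
        · exact logb_two_le_two_mul_clog_sub_one hk
        · linarith
    _ = ((Nat.clog 2 k - 1 : ℕ) : ℝ) / (4 * Nat.clog 2 n) := by ring

end Clog

/-- **Proposition 3.2 (Δ_k(n) ≥ C′·log k / log n).** There is a constant C′ > 0 such that for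
all n ≥ k ≥ 3 there exist n distinct points in the plane with the property that every
k-subset contains three pairwise distinct points whose angle is at least C′·log(k)/log(n)
away from both 0° and 180°. -/
theorem delta_lower_bound :
    ∃ C' : ℝ, 0 < C' ∧ ∀ n k : ℕ, 3 ≤ k → k ≤ n →
      ∃ S : Finset (EuclideanSpace ℝ (Fin 2)), S.card = n ∧
        ∀ T ⊆ S, T.card = k →
          ∃ A ∈ T, ∃ B ∈ T, ∃ D ∈ T, A ≠ B ∧ B ≠ D ∧ A ≠ D ∧
            C' * Real.log k / Real.log n ≤ ∠ A B D ∧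
            ∠ A B D ≤ π - C' * Real.log k / Real.log n := by
  classical
  refine ⟨1 / 16, by norm_num, fun n k hk hkn => ?_⟩
  have hinj : Function.Injective (szekeresPoint 7 (Nat.clog 2 n)) :=
    szekeresPoint_injective (by norm_num) _
  obtain ⟨F, hF, hFn⟩ : ∃ F ⊆ (Finset.range (Nat.clog 2 n)).powerset, F.card = n := by
    refine Finset.exists_subset_card_eq ?_
    rw [Finset.card_powerset, Finset.card_range]
    exact Nat.le_pow_clog one_lt_two n
  refine ⟨F.image (szekeresPoint 7 (Nat.clog 2 n)), ?_, fun T hT hTk => ?_⟩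
  · rw [Finset.card_image_of_injective _ hinj, hFn]
  obtain ⟨G, hG, rfl⟩ := Finset.subset_image_iff.mp hT
  rw [Finset.card_image_of_injective _ hinj] at hTk
  obtain ⟨A, hA, B, hB, D, hD, hAB, hBD, hAD, hlower, hupper⟩ :=
    exists_le_angle_szekeresPoint (m := Nat.clog 2 k - 1) le_rfl
      (Nat.le_sub_of_add_le ((Nat.lt_clog_iff_pow_lt one_lt_two).mpr hk))
      (fun E hE => Finset.mem_powerset.mp (hF (hG hE)))
      (hTk ▸ Nat.pow_pred_clog_lt_self one_lt_two (by lia))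
  have hlog := log_div_log_le_clog_sub_one_div_clog hk (by lia : 2 ≤ n)
  exact ⟨_, Finset.mem_image_of_mem _ hA, _, Finset.mem_image_of_mem _ hB,
    _, Finset.mem_image_of_mem _ hD, hinj.ne hAB, hinj.ne hBD, hinj.ne hAD,
    hlog.trans hlower, hupper.trans (by gcongr)⟩
end

section
/- Let m ≥ 1, k ≥ 2, and n ≥ (k−1)^m + 1 be integers, and let c be any function assigning to each pair (i, j) with 1 ≤ i < j ≤ n a color in {1, …, m}. Then there exist indices i₁ < i₂ < ⋯ < i_k such that c(i₁, i₂) = c(i₂, i₃) = ⋯ = c(i_{k−1}, i_k). -/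
/-!
Label each element by the function that sends a color to the length of the longest chain of that
color ending there. If `x < y` and the pair `(x, y)` has color `b`, then a chain of color `b` ending
at `x` extends to `y`, so the two labels differ at `b`. Labels are therefore pairwise distinct; if
all these lengths, counted in steps, were less than `k - 1`, there would be at most `(k - 1) ^ m`
labels.
-/

open scoped SetRel

section RelHeight

variable {α : Type*} {r : SetRel α α} {a b : α} {d : ℕ}

/-- The supremum of the lengths of the `r`-series ending at `a`, the analogue of `Order.height` for
an arbitrary relation. As for `RelSeries`, the length of a series is its number of steps, so that
the one-term series has length `0`. -/
noncomputable def relHeight (r : SetRel α α) (a : α) : ℕ∞ :=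
  ⨆ (p : RelSeries r) (_ : p.last = a), (p.length : ℕ∞)

theorem relHeight_add_one_le_iff {n : ℕ∞} :
    relHeight r a + 1 ≤ n ↔ ∀ p : RelSeries r, p.last = a → (p.length : ℕ∞) + 1 ≤ n := by
  have hexists : ∃ p : RelSeries r, p.last = a := ⟨.singleton r a, RelSeries.last_singleton a⟩
  rw [relHeight, ENat.biSup_add' hexists, iSup₂_le_iff]

theorem relHeight_add_one_le_of_rel (hab : a ~[r] b) : relHeight r a + 1 ≤ relHeight r b := by
  rw [relHeight_add_one_le_iff]
  rintro p rfl
  exact le_iSup₂_of_le (p.snoc b hab) (p.last_snoc b hab) (by simp)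

theorem relHeight_lt_of_forall_length_lt (h : ∀ p : RelSeries r, p.length < d) (a : α) :
    relHeight r a < d := by
  rw [← ENat.add_one_le_iff' (ENat.natCast_ne_top d), relHeight_add_one_le_iff]
  exact fun p _ => mod_cast h p

theorem exists_fin_forall_rel_lt_of_forall_length_lt (h : ∀ p : RelSeries r, p.length < d) :
    ∃ f : α → Fin d, ∀ a b, a ~[r] b → f a < f b := by
  choose height hheight using fun a =>
    ENat.ne_top_iff_exists.1 (relHeight_lt_of_forall_length_lt h a).ne_top
  have hlt (a : α) : height a < d := by
    simpa only [← hheight, Nat.cast_lt] using relHeight_lt_of_forall_length_lt h a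
  refine ⟨fun a => ⟨height a, hlt a⟩, fun a b hab => Nat.lt_of_succ_le ?_⟩
  have hle := relHeight_add_one_le_of_rel hab
  rw [← hheight, ← hheight] at hle
  exact_mod_cast hle

end RelHeight

theorem exists_relSeries_length_eq_of_pow_lt_card {α ι : Type*} [Fintype α] [Fintype ι] {d : ℕ}
    {r : ι → SetRel α α} (hr : Pairwise fun x y => ∃ i, x ~[r i] y ∨ y ~[r i] x)
    (hcard : d ^ Fintype.card ι < Fintype.card α) :
    ∃ i, ∃ p : RelSeries (r i), p.length = d := by
  classical
  suffices h : ∃ i, ∃ p : RelSeries (r i), d ≤ p.length by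
    obtain ⟨i, p, hp⟩ := h
    exact ⟨i, p.take ⟨d, Nat.lt_succ_of_le hp⟩, rfl⟩
  by_contra! hshort
  choose label hlabel using fun i => exists_fin_forall_rel_lt_of_forall_length_lt (hshort i)
  obtain ⟨x, y, hxy, heq⟩ := Fintype.exists_ne_map_eq_of_card_lt (fun x i => label i x)
    (by simpa using hcard)
  obtain ⟨i, h | h⟩ := hr hxy
  · exact (hlabel i x y h).ne (congrFun heq i)
  · exact (hlabel i y x h).ne' (congrFun heq i)

theorem monochromatic_chain_general {α ι : Type*} [LinearOrder α] [Fintype ι] {d : ℕ}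
    (c : α → α → ι) (s : Finset α) (hs : d ^ Fintype.card ι < s.card) :
    ∃ f : Fin (d + 1) → α, StrictMono f ∧ (∀ t, f t ∈ s) ∧
      ∃ col, ∀ i j : Fin (d + 1), (j : ℕ) = (i : ℕ) + 1 → c (f i) (f j) = col := by
  let r (col : ι) : SetRel s s := {p | p.1 < p.2 ∧ c p.1 p.2 = col}
  have hr : Pairwise fun x y => ∃ col, x ~[r col] y ∨ y ~[r col] x := fun x y hxy =>
    hxy.lt_or_gt.elim (fun h => ⟨c x y, .inl ⟨h, rfl⟩⟩) (fun h => ⟨c y x, .inr ⟨h, rfl⟩⟩)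
  obtain ⟨col, p, rfl⟩ := exists_relSeries_length_eq_of_pow_lt_card hr (by simpa using hs)
  refine ⟨fun t => p t, Fin.strictMono_iff_lt_succ.2 fun i => (p.step i).1, fun t => (p t).2,
    col, fun i j hij => ?_⟩
  obtain ⟨i, rfl⟩ : ∃ i' : Fin p.length, i = i'.castSucc := ⟨⟨i, by omega⟩, rfl⟩
  obtain rfl : j = i.succ := Fin.ext hij
  exact (p.step i).2

/-- Pigeonhole chain lemma from Proposition 3.1: any m-coloring of the pairs from
{1, …, n} with n ≥ (k−1)^m + 1 admits indices i₁ < ⋯ < i_k whose consecutive pairs all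
receive the same color. -/
theorem monochromatic_chain (m k n : ℕ) (hm : 1 ≤ m) (hk : 2 ≤ k)
    (hn : (k - 1) ^ m + 1 ≤ n) (c : ℕ → ℕ → Fin m) :
    ∃ f : Fin k → ℕ, StrictMono f ∧ (∀ t, 1 ≤ f t ∧ f t ≤ n) ∧
      ∃ col : Fin m, ∀ i j : Fin k, (j : ℕ) = (i : ℕ) + 1 → c (f i) (f j) = col := by
  obtain ⟨d, rfl⟩ : ∃ d, k = d + 1 := ⟨k - 1, by omega⟩
  simpa only [Finset.mem_Icc] using
    monochromatic_chain_general c (Finset.Icc 1 n) (by simpa using hn)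
end
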